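/- arXiv:0801.4571 — 6 statements merged into one kernel-verified Lean document; each statement's English description precedes it below -/
import Mathlib

section
/- Let a CSP with obedience conditionals (ω_v)_{v∈V} be given, with its normally realized MRF, and for each pair (v-b) let ρ_{b→v} and λ_{v→b} be arbitrary real-valued functions on ordered pairs of tokens on v (with λ_{v→b}((a, ∅)) interpreted as 0). Then: (i) for every pair (v-c) and every ordered pair (s^L, s^R) of tokens on v, Σ_y Σ_{(s_{v,b})_{b∈C(v)∖{c}}} g_v(y, (s_{v,b})_{b∈C(v)}) · ∏_{b∈C(v)∖{c}} ρ_{b→v}(s_{v,b}) — where y ranges over tokens on v, each s_{v,b} ranges over ordered pairs of tokens on v, and s_{v,c} := (s^L, s^R) — equals Σ_{(s^R_b)_{b∈C(v)∖{c}}} ω_v(s^L | s^R ∩ ⋂_{b∈C(v)∖{c}} s^R_b) · ∏_{b∈C(v)∖{c}} ρ_{b→v}((s^L, s^R_b)), where each s^R_b ranges over tokens on v; (ii) for every pair (v-c) and every ordered pair (s^L, s^R) of tokens on v, Σ_{(s_{u,c})_{u∈V(c)∖{v}}} f_c((s_{u,c})_{u∈V(c)}) · ∏_{u∈V(c)∖{v}}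 λ_{u→c}(s_{u,c}) — where s_{v,c} := (s^L, s^R) — equals Σ_{(s^L_u)_{u∈V(c)∖{v}}} [s^R = F_c^v((s^L_u)_{u∈V(c)∖{v}})] · ∏_{u∈V(c)∖{v}} λ_{u→c}((s^L_u, F_c^u(r_u))), where each s^L_u ranges over tokens on u and r_u is the rectangle on V(c)∖{u} with v-component s^L and w-component s^L_w for w ∈ V(c)∖{u,v}; (iii) for every v ∈ V and every token y on v, Σ_{(s_{v,c})_{c∈C(v)}} g_v(y, (s_{v,c})_{c∈C(v)}) · ∏_{c∈C(v)} ρ_{c→v}(s_{v,c}) equals Σ_{(s^R_c)_{c∈C(v)}} ω_v(y | ⋂_{c∈C(v)} s^R_c) · ∏_{c∈C(v)} ρ_{c→v}((y, s^R_c)). -/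
/-!
Each update is a finite sum over families of pairs of tokens `(s^L_i, s^R_i)`, in which a product
of indicators pins one of the two components. Writing a family of pairs as a pair of families and
exchanging product and sum (`Fintype.prod_sum`) reduces everything to one index at a time.

For the left functions the indicators pin `s^L_i = y` (`sum_pairs_pin_left`); in (i) the factor of
the distinguished constraint `c` also pins `y = s^L`. For the right functions they pin
`s^R_i` to the forced token, which may be empty and hence not a token; the convention
`λ(a, ∅) = 0` makes the collapsed term vanish in that case (`sum_token_indicator`,
`sum_pairs_pin_right`).
-/

open Finset

variable {V C χ : Type} [Fintype V] [DecidableEq V] [Fintype C] [DecidableEq C]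
  [Fintype χ] [DecidableEq χ]

/-- A token on a coordinate: a nonempty subset of the alphabet `χ`. -/
abbrev Token (χ : Type) := {s : Finset χ // s.Nonempty}

/-- `C(v)`: the set of constraints involving coordinate `v`. -/
def Cv (Vc : C → Finset V) (v : V) : Finset C := univ.filter fun c => v ∈ Vc c

/-- The forced token `F_c^v(t)`: all `a ∈ χ` for which some `x ∈ Γ_c` has `x v = a`
and `x u ∈ t u` for every other coordinate `u ∈ V(c)`. -/
def forced (Γ : C → Finset (V → χ)) (Vc : C → Finset V) (c : C) (v : V)
    (t : V → Finset χ) : Finset χ :=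
  univ.filter fun a => ∃ x ∈ Γ c, x v = a ∧ ∀ u ∈ Vc c, u ≠ v → x u ∈ t u

/-- The left function `g_v` of the normally realized MRF:
`g_v(y_v, (s_{v,c})_{c∈C(v)}) = ω_v(y_v | ⋂_{c∈C(v)} s^R_{v,c}) · ∏_{c∈C(v)} [s^L_{v,c} = y_v]`. -/
def gfun (Vc : C → Finset V) (ω : V → Token χ → Finset χ → ℝ) (v : V)
    (y : Token χ) (s : C → Token χ × Token χ) : ℝ :=
  ω v y ((Cv Vc v).inf fun c => ((s c).2).val) *
    ∏ c ∈ Cv Vc v, (if (s c).1 = y then (1 : ℝ) else 0)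

/-- The right function `f_c` of the normally realized MRF:
`f_c((s_{v,c})_{v∈V(c)}) = ∏_{v∈V(c)} [s^R_{v,c} = F_c^v((s^L_{u,c})_{u∈V(c)∖{v}})]`. -/
def ffun (Γ : C → Finset (V → χ)) (Vc : C → Finset V) (c : C)
    (s : V → Token χ × Token χ) : ℝ :=
  ∏ v ∈ Vc c,
    (if ((s v).2).val = forced Γ Vc c v (fun u => ((s u).1).val) then (1 : ℝ) else 0)

/-- The global function `F` of the normally realized MRF. -/
def Fglob (Γ : C → Finset (V → χ)) (Vc : C → Finset V)
    (ω : V → Token χ → Finset χ → ℝ)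
    (y : V → Token χ) (s : V → C → Token χ × Token χ) : ℝ :=
  (∏ v, gfun Vc ω v (y v) (s v)) * ∏ c, ffun Γ Vc c fun v => s v c

/-- Summing over families of pairs whose first components are all pinned to `y` leaves a sum over
the second components. -/
lemma sum_pairs_pin_left {ι T : Type} [Fintype ι] [DecidableEq ι] [Fintype T] [DecidableEq T]
    (y : T) (W : (ι → T) → ℝ) (r : ι → T → T → ℝ) :
    (∑ s : ι → T × T, W (fun i => (s i).2) * (∏ i, if (s i).1 = y then (1 : ℝ) else 0) *
        ∏ i, r i (s i).1 (s i).2) =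
      ∑ t : ι → T, W t * ∏ i, r i y (t i) := by
  rw [← (Equiv.arrowProdEquivProdArrow ι (fun _ => T) (fun _ => T)).symm.sum_comp,
    Fintype.sum_prod_type_right]
  refine sum_congr rfl fun t _ => ?_
  have h : ∏ i, r i y (t i) = ∏ i, ∑ a : T, (if a = y then (1 : ℝ) else 0) * r i a (t i) := by
    simp
  rw [h, Fintype.prod_sum, mul_sum]
  refine sum_congr rfl fun a _ => ?_
  rw [prod_mul_distrib, ← mul_assoc]
  rfl

/-- The set `G` need not be a token: if it is empty, no summand survives, and `f ∅ = 0`. -/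
lemma sum_token_indicator (G : Finset χ) (f : Finset χ → ℝ) (hf : f ∅ = 0) :
    (∑ t : Token χ, (if t.val = G then (1 : ℝ) else 0) * f t.val) = f G := by
  rcases G.eq_empty_or_nonempty with rfl | hG
  · rw [hf]
    refine sum_eq_zero fun t _ => ?_
    simp [t.2.ne_empty]
  · rw [Fintype.sum_eq_single (⟨G, hG⟩ : Token χ)]
    · simp
    · intro t ht
      rw [if_neg fun h => ht (Subtype.ext h), zero_mul]

/-- Summing over families of pairs whose second components are pinned to sets determined by the
first components leaves a sum over the first components. -/
lemma sum_pairs_pin_right {ι : Type} [Fintype ι] [DecidableEq ι]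
    (W : (ι → Token χ) → ℝ) (G : (ι → Token χ) → ι → Finset χ)
    (l : ι → Token χ → Finset χ → ℝ) (hl : ∀ i a, l i a ∅ = 0) :
    (∑ s : ι → Token χ × Token χ, W (fun i => (s i).1) *
        (∏ i, if ((s i).2).val = G (fun j => (s j).1) i then (1 : ℝ) else 0) *
        ∏ i, l i (s i).1 ((s i).2).val) =
      ∑ t : ι → Token χ, W t * ∏ i, l i (t i) (G t i) := by
  rw [← (Equiv.arrowProdEquivProdArrow ι (fun _ => Token χ) (fun _ => Token χ)).symm.sum_comp,
    Fintype.sum_prod_type]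
  refine sum_congr rfl fun t _ => ?_
  have h : ∏ i, l i (t i) (G t i) =
      ∏ i, ∑ a : Token χ, (if a.val = G t i then (1 : ℝ) else 0) * l i (t i) a.val :=
    prod_congr rfl fun i _ => (sum_token_indicator (G t i) (l i (t i)) (hl i (t i))).symm
  rw [h, Fintype.prod_sum, mul_sum]
  refine sum_congr rfl fun a _ => ?_
  rw [prod_mul_distrib, ← mul_assoc]
  rfl

/-- The forced token depends only on the components of the rectangle on `V(c) ∖ {v}`. -/
lemma forced_congr (Γ : C → Finset (V → χ)) (Vc : C → Finset V) (c : C) (v : V)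
    {t t' : V → Finset χ} (h : ∀ u ∈ Vc c, u ≠ v → t u = t' u) :
    forced Γ Vc c v t = forced Γ Vc c v t' := by
  unfold forced
  refine filter_congr fun a _ => exists_congr fun x => and_congr_right fun _ =>
    and_congr_right fun _ => forall_congr' fun u => forall_congr' fun hu => forall_congr' fun hn => ?_
  rw [h u hu hn]

/-- `g_v` with the argument at `c` split off from the arguments indexed by `C(v) ∖ {c}`. -/
lemma gfun_split (Vc : C → Finset V) (ω : V → Token χ → Finset χ → ℝ) (v : V) (c : C)
    (hc : c ∈ Cv Vc v) (y sL sR : Token χ)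
    (s' : {b // b ∈ (Cv Vc v).erase c} → Token χ × Token χ) :
    gfun Vc ω v y (fun b => if h : b ∈ (Cv Vc v).erase c then s' ⟨b, h⟩ else (sL, sR)) =
      (if sL = y then (1 : ℝ) else 0) *
        (ω v y (sR.val ∩ univ.inf fun b => ((s' b).2).val) *
          ∏ b, if (s' b).1 = y then (1 : ℝ) else 0) := by
  unfold gfun
  have h1 : ((Cv Vc v).inf fun b => ((if h : b ∈ (Cv Vc v).erase c then s' ⟨b, h⟩
      else (sL, sR)).2).val) = sR.val ∩ univ.inf fun b => ((s' b).2).val := by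
    have key (f : C → Finset χ) : (Cv Vc v).inf f = f c ⊓ ((Cv Vc v).erase c).inf f := by
      rw [← inf_insert, insert_erase hc]
    rw [key]
    rw [← inf_attach ((Cv Vc v).erase c)]
    simp [univ_eq_attach]
  rw [h1, ← mul_prod_erase _ _ hc, ← prod_coe_sort ((Cv Vc v).erase c)]
  have h2 : ∀ b : {b // b ∈ (Cv Vc v).erase c},
      (if h : b.val ∈ (Cv Vc v).erase c then s' ⟨b.val, h⟩ else (sL, sR)) = s' b :=
    fun b => dif_pos b.2
  simp only [h2]
  simp

lemma gfun_all (Vc : C → Finset V) (ω : V → Token χ → Finset χ → ℝ) (v : V)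
    (y : Token χ) (s' : {b // b ∈ Cv Vc v} → Token χ × Token χ) :
    gfun Vc ω v y (fun b => if h : b ∈ Cv Vc v then s' ⟨b, h⟩ else (y, y)) =
      ω v y (univ.inf fun b => ((s' b).2).val) *
          ∏ b, if (s' b).1 = y then (1 : ℝ) else 0 := by
  unfold gfun
  have h2 : ∀ b : {b // b ∈ Cv Vc v},
      (if h : b.val ∈ Cv Vc v then s' ⟨b.val, h⟩ else (y, y)) = s' b :=
    fun b => dif_pos b.2
  rw [← inf_attach (Cv Vc v), ← prod_coe_sort (Cv Vc v)]
  simp only [h2, univ_eq_attach]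

/-- `f_c` with the factor at `v` split off, the forced tokens written through the rectangles that
appear in the collapsed right update. -/
lemma ffun_split (Γ : C → Finset (V → χ)) (Vc : C → Finset V) (c : C) (v : V)
    (hv : v ∈ Vc c) (sL sR : Token χ)
    (s' : {u // u ∈ (Vc c).erase v} → Token χ × Token χ) :
    ffun Γ Vc c (fun u => if h : u ∈ (Vc c).erase v then s' ⟨u, h⟩ else (sL, sR)) =
      (if sR.val = forced Γ Vc c v
          (fun w => if h : w ∈ (Vc c).erase v then ((s' ⟨w, h⟩).1).val else ∅)
        then (1 : ℝ) else 0) *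
      ∏ u : {u // u ∈ (Vc c).erase v}, if ((s' u).2).val = forced Γ Vc c u.val
          (fun w => if w = v then sL.val
            else if h : w ∈ (Vc c).erase v then ((s' ⟨w, h⟩).1).val else ∅)
        then (1 : ℝ) else 0 := by
  unfold ffun
  rw [← mul_prod_erase _ _ hv, ← prod_coe_sort ((Vc c).erase v)]
  congr 1
  · rw [forced_congr Γ Vc c v (t' := fun w => if h : w ∈ (Vc c).erase v
      then ((s' ⟨w, h⟩).1).val else ∅)]
    · simp
    · intro u hu hn
      simp [hu, hn]
  · refine prod_congr rfl fun u _ => ?_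
    rw [forced_congr Γ Vc c u.val (t' := fun w => if w = v then sL.val
            else if h : w ∈ (Vc c).erase v then ((s' ⟨w, h⟩).1).val else ∅)]
    · simp only [dif_pos u.2]
    · intro w hw _
      by_cases hwv : w = v
      · simp [hwv]
      · simp [hw, hwv]

/-- the BP message-update rule on the normally realized MRF.
With arbitrary right messages `ρ_{b→v}` (functions on ordered pairs of tokens) and
left messages `λ_{v→b}` (functions on a token paired with a subset, with
`λ_{v→b}(a, ∅) = 0`):
(i) the BP left-message sum collapses to the stated form;
(ii) the BP right-message sum collapses to the stated form;
(iii) the BP summary sum collapses to the stated form. -/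
theorem stmt3 (Γ : C → Finset (V → χ)) (Vc : C → Finset V)
    (hVc : ∀ c : C, 2 ≤ (Vc c).card)
    (hCv : ∀ v : V, 2 ≤ (Cv Vc v).card)
    (ω : V → Token χ → Finset χ → ℝ)
    (hω_nonneg : ∀ (v : V) (a : Token χ) (b : Finset χ), 0 ≤ ω v a b)
    (hω_empty : ∀ (v : V) (a : Token χ), ω v a ∅ = 0)
    (hω_sub : ∀ (v : V) (a : Token χ) (b : Finset χ), ¬ a.val ⊆ b → ω v a b = 0)
    (ρ : C → V → Token χ → Token χ → ℝ)
    (lam : V → C → Token χ → Finset χ → ℝ)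
    (hlam_empty : ∀ (v : V) (b : C) (a : Token χ), lam v b a ∅ = 0) :
    -- (i) the left-message update
    (∀ v : V, ∀ c ∈ Cv Vc v, ∀ sL sR : Token χ,
      (∑ y : Token χ, ∑ s' : {b // b ∈ (Cv Vc v).erase c} → Token χ × Token χ,
        gfun Vc ω v y
            (fun b => if h : b ∈ (Cv Vc v).erase c then s' ⟨b, h⟩ else (sL, sR)) *
          ∏ b : {b // b ∈ (Cv Vc v).erase c}, ρ b.val v (s' b).1 (s' b).2) =
      ∑ sR' : {b // b ∈ (Cv Vc v).erase c} → Token χ,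
        ω v sL (sR.val ∩
            univ.inf fun b : {b // b ∈ (Cv Vc v).erase c} => (sR' b).val) *
          ∏ b : {b // b ∈ (Cv Vc v).erase c}, ρ b.val v sL (sR' b)) ∧
    -- (ii) the right-message update
    (∀ v : V, ∀ c ∈ Cv Vc v, ∀ sL sR : Token χ,
      (∑ s' : {u // u ∈ (Vc c).erase v} → Token χ × Token χ,
        ffun Γ Vc c
            (fun u => if h : u ∈ (Vc c).erase v then s' ⟨u, h⟩ else (sL, sR)) *
          ∏ u : {u // u ∈ (Vc c).erase v}, lam u.val c (s' u).1 ((s' u).2).val) =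
      ∑ sL' : {u // u ∈ (Vc c).erase v} → Token χ,
        (if sR.val = forced Γ Vc c v
              (fun w => if h : w ∈ (Vc c).erase v then (sL' ⟨w, h⟩).val else ∅)
          then (1 : ℝ) else 0) *
          ∏ u : {u // u ∈ (Vc c).erase v},
            lam u.val c (sL' u)
              (forced Γ Vc c u.val
                (fun w => if w = v then sL.val
                  else if h : w ∈ (Vc c).erase v then (sL' ⟨w, h⟩).val else ∅))) ∧
    -- (iii) the summary update
    (∀ v : V, ∀ y : Token χ,
      (∑ s' : {c // c ∈ Cv Vc v} → Token χ × Token χ,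
        gfun Vc ω v y
            (fun c => if h : c ∈ Cv Vc v then s' ⟨c, h⟩ else (y, y)) *
          ∏ c : {c // c ∈ Cv Vc v}, ρ c.val v (s' c).1 (s' c).2) =
      ∑ sR' : {c // c ∈ Cv Vc v} → Token χ,
        ω v y (univ.inf fun c : {c // c ∈ Cv Vc v} => (sR' c).val) *
          ∏ c : {c // c ∈ Cv Vc v}, ρ c.val v y (sR' c)) := by
  refine ⟨fun v c hc sL sR => ?_, fun v c hc sL sR => ?_, fun v y => ?_⟩
  · simp only [gfun_split Vc ω v c hc]
    -- the factor at `c` kills every summand with `y ≠ sL`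
    rw [Fintype.sum_eq_single sL]
    · simp only [if_true, one_mul]
      exact sum_pairs_pin_left (ι := {b // b ∈ (Cv Vc v).erase c}) sL
        (fun t => ω v sL (sR.val ∩ univ.inf fun b => (t b).val)) (fun b => ρ b.val v)
    · intro y hy
      simp [hy.symm]
  · have hv : v ∈ Vc c := by simpa [Cv] using hc
    simp only [ffun_split Γ Vc c v hv]
    exact sum_pairs_pin_right (ι := {u // u ∈ (Vc c).erase v})
      (fun t => if sR.val = forced Γ Vc c v
          (fun w => if h : w ∈ (Vc c).erase v then (t ⟨w, h⟩).val else ∅)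
        then (1 : ℝ) else 0)
      (fun t u => forced Γ Vc c u.val (fun w => if w = v then sL.val
            else if h : w ∈ (Vc c).erase v then (t ⟨w, h⟩).val else ∅))
      (fun u => lam u.val c) (fun u a => hlam_empty u.val c a)
  · simp only [gfun_all]
    exact sum_pairs_pin_left (ι := {b // b ∈ Cv Vc v}) y
      (fun t => ω v y (univ.inf fun b => (t b).val)) (fun b => ρ b.val v)
end

section
/- Consider a k-SAT instance, γ ∈ ℝ, and the normally realized MRF of the instance in which every ω_v is the k-SAT obedience conditional with parameter γ. If (y, s) is a valid configuration (F(y, s) ≠ 0), then for every pair (v-c): s^R_{v,c} ≠ {1−L_{v,c}}; (s^L_{v,c}, s^R_{v,c}) ≠ ({1−L_{v,c}}, {L_{v,c}}); and (s^L_{v,c}, s^R_{v,c}) ≠ ({0,1}, {L_{v,c}}). -/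
/-!
The forced token of a clause `c` at `v` always contains the preferred value `L_{v,c}`: giving `v`
that value satisfies the clause whatever the other coordinates do, and the incoming tokens are
nonempty (`pref_mem_forced`). In a valid configuration `s^R_{v,c}` is this forced token, so it is
not `{1 - L_{v,c}}`. Moreover the obedience conditional is supported on `a ⊆ b`
(`subset_of_ksatOmega_ne_zero`), so `s^L_{v,c} = y_v ⊆ ⋂ s^R ⊆ s^R_{v,c}`; this excludes the
other two pairs, whose left token contains `1 - L_{v,c}` while the right one does not.
-/

open Finset

variable {V C χ : Type} [Fintype V] [DecidableEq V] [Fintype C] [DecidableEq C]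
  [Fintype χ] [DecidableEq χ]

/-- The k-SAT constraint `Γ_c`: all assignments except the one sending every
`v ∈ V(c)` to the negation `1 − L_{v,c}` of its preferred value. -/
def ksatGamma (Vc : C → Finset V) (L : V → C → Bool) : C → Finset (V → Bool) :=
  fun c => univ.filter fun x => ¬ ∀ v ∈ Vc c, x v = !(L v c)

/-- The k-SAT obedience conditional with parameter `γ`:
`ω(a|b) = γ` if `a = b = {0,1}`; `1−γ` if `a ⊊ b = {0,1}`; `1` if `a = b ≠ {0,1}`;
`0` otherwise. -/
def ksatOmega (γ : ℝ) (a : Token Bool) (b : Finset Bool) : ℝ :=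
  if a.val = b ∧ b = ({false, true} : Finset Bool) then γ
  else if a.val ⊂ b ∧ b = ({false, true} : Finset Bool) then 1 - γ
  else if a.val = b ∧ b ≠ ({false, true} : Finset Bool) then 1
  else 0

theorem pref_mem_forced (Vc : C → Finset V) (L : V → C → Bool) (v : V) (c : C) (hv : v ∈ Vc c)
    (t : V → Token Bool) :
    L v c ∈ forced (ksatGamma Vc L) Vc c v (fun u => (t u).val) := by
  choose x hx using fun u => (t u).property
  simp only [forced, ksatGamma, mem_filter, mem_univ, true_and]
  refine ⟨Function.update x v (L v c), ?_, by simp, ?_⟩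
  · intro h
    have := h v hv
    simp at this
  · intro u _ huv
    simpa [huv] using hx u

theorem subset_of_ksatOmega_ne_zero (γ : ℝ) (a : Token Bool) (b : Finset Bool)
    (h : ksatOmega γ a b ≠ 0) : a.val ⊆ b := by
  unfold ksatOmega at h
  split_ifs at h with h1 h2 h3
  · exact h1.1.subset
  · exact h2.1.subset
  · exact h3.1.subset
  · exact absurd rfl h

/-- For a k-SAT instance, `γ ∈ ℝ`, and the normally realized MRF in
which every `ω_v` is the k-SAT obedience conditional with parameter `γ`: if `(y, s)` is
a valid configuration (`F(y,s) ≠ 0`), then for every pair `(v-c)`: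
`s^R_{v,c} ≠ {1−L_{v,c}}`, `(s^L,s^R)_{v,c} ≠ ({1−L_{v,c}}, {L_{v,c}})`, and
`(s^L,s^R)_{v,c} ≠ ({0,1}, {L_{v,c}})`. -/
theorem stmt4 (γ : ℝ) (k : ℕ) (Vc : C → Finset V) (L : V → C → Bool)
    (hk2 : 2 ≤ k) (hk : ∀ c : C, (Vc c).card = k)
    (hCv : ∀ v : V, 2 ≤ (Cv Vc v).card)
    (y : V → Token Bool) (s : V → C → Token Bool × Token Bool)
    (hvalid : Fglob (ksatGamma Vc L) Vc (fun _ => ksatOmega γ) y s ≠ 0) :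
    ∀ v : V, ∀ c ∈ Cv Vc v,
      ((s v c).2).val ≠ ({!(L v c)} : Finset Bool) ∧
      ¬(((s v c).1).val = ({!(L v c)} : Finset Bool) ∧
          ((s v c).2).val = ({L v c} : Finset Bool)) ∧
      ¬(((s v c).1).val = ({false, true} : Finset Bool) ∧
          ((s v c).2).val = ({L v c} : Finset Bool)) := by
  intro v c hc
  have hv : v ∈ Vc c := by simpa [Cv] using hc
  unfold Fglob at hvalid
  have hg := prod_ne_zero_iff.mp (left_ne_zero_of_mul hvalid) v (mem_univ v)
  have hf := prod_ne_zero_iff.mp (right_ne_zero_of_mul hvalid) c (mem_univ c)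
  unfold gfun at hg
  unfold ffun at hf
  have hR : ((s v c).2).val =
      forced (ksatGamma Vc L) Vc c v (fun u => ((s u c).1).val) := by
    simpa using prod_ne_zero_iff.mp hf v hv
  have hL : (s v c).1 = y v := by
    simpa using prod_ne_zero_iff.mp (right_ne_zero_of_mul hg) c hc
  have hmem : L v c ∈ ((s v c).2).val := by
    rw [hR]
    exact pref_mem_forced Vc L v c hv fun u => (s u c).1
  have hsub : ((s v c).1).val ⊆ ((s v c).2).val := by
    rw [hL]
    exact (subset_of_ksatOmega_ne_zero γ _ _ (left_ne_zero_of_mul hg)).trans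
      (inf_le (f := fun c => ((s v c).2).val) hc)
  refine ⟨?_, ?_, ?_⟩
  · intro h
    rw [h] at hmem
    simp at hmem
  · rintro ⟨h1, h2⟩
    rw [h1, h2] at hsub
    simp at hsub
  · rintro ⟨h1, h2⟩
    rw [h1, h2] at hsub
    have : (!(L v c)) ∈ ({L v c} : Finset Bool) := hsub (by cases L v c <;> simp)
    simp at this
end

section
/- Consider a k-SAT instance and γ ∈ ℝ, and run weighted PTP with every ω_v equal to the k-SAT obedience conditional with parameter γ. Suppose the current normalized right messages ρ^norm_{b→v} are arbitrary real-valued functions on the tokens {0},{1},{0,1} and the current normalized left messages λ^norm_{u→c} satisfy λ^norm_{u→c}({0})+λ^norm_{u→c}({1})+λ^norm_{u→c}({0,1}) = 1. Then the weighted PTP update formulas evaluate to: λ_{v→c}({0}) = ∏_{b∈C(v)∖{c}}(ρ^norm_{b→v}({0})+ρ^norm_{b→v}({0,1})) − γ·∏_{b∈C(v)∖{c}} ρ^norm_{b→v}({0,1}); λ_{v→c}({1}) = ∏_{b∈C(v)∖{c}}(ρ^norm_{b→v}({1})+ρ^norm_{b→v}({0,1})) − γ·∏_{b∈C(v)∖{c}}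 ρ^norm_{b→v}({0,1}); λ_{v→c}({0,1}) = γ·∏_{b∈C(v)∖{c}} ρ^norm_{b→v}({0,1}); ρ_{c→v}({0}) = [L_{v,c}=0]·P_{c,v}, ρ_{c→v}({1}) = [L_{v,c}=1]·P_{c,v}, ρ_{c→v}({0,1}) = 1 − P_{c,v}, where P_{c,v} := ∏_{u∈V(c)∖{v}: L_{u,c}=1} λ^norm_{u→c}({0}) · ∏_{u∈V(c)∖{v}: L_{u,c}=0} λ^norm_{u→c}({1}); μ_v({0}) = ∏_{c∈C(v)}(ρ^norm_{c→v}({0})+ρ^norm_{c→v}({0,1})) − γ·∏_{c∈C(v)} ρ^norm_{c→v}({0,1}); μ_v({1}) = ∏_{c∈C(v)}(ρ^norm_{c→v}({1})+ρ^norm_{c→v}({0,1})) − γ·∏_{c∈C(v)} ρ^norm_{c→v}({0,1}); and μ_v({0,1}) = γ·∏_{c∈C(v)} ρ^norm_{c→v}({0,1}). -/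
/-!
The obedience conditional is a combination of two indicators of the intersection `S` of the incoming
tokens: `ω({a}|S) = [a ∈ S] − γ·[S = {0,1}]` and `ω({0,1}|S) = γ·[S = {0,1}]`. Membership of `a` in
an intersection, and fullness of an intersection, are both conditions on each token separately, so
each sum over families factorizes by distributivity (`sum_families`); this gives the left-message
and summary updates (`sum_omega_single`, `sum_omega_full`).

For the right messages, `forced_ksat` shows that the clause forces `{L_{v,c}}` exactly when every
other coordinate `u` carries the singleton token `{1 − L_{u,c}}`, and forces `{0,1}` otherwise. The
single family of the first kind has weight `P_{c,v}` (`sum_pinned`), and all families together have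
weight `1` because the left messages are normalized (`sum_unpinned`).
-/

open Finset

variable {V C χ : Type} [Fintype V] [DecidableEq V] [Fintype C] [DecidableEq C]
  [Fintype χ] [DecidableEq χ]

/-- The token `{0}` (with `0 ↔ false`). -/
def tok0 : Token Bool := ⟨{false}, Finset.singleton_nonempty _⟩
/-- The token `{1}`. -/
def tok1 : Token Bool := ⟨{true}, Finset.singleton_nonempty _⟩
/-- The token `{0,1}`. -/
def tok01 : Token Bool := ⟨{false, true}, Finset.insert_nonempty _ _⟩

/-- The singleton token `{a}`. -/
def singleTok (a : Bool) : Token Bool := ⟨{a}, Finset.singleton_nonempty _⟩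

lemma sum_token (f : Token Bool → ℝ) : ∑ t, f t = f tok0 + f tok1 + f tok01 := by
  have h : (univ : Finset (Token Bool)) = {tok0, tok1, tok01} := by decide
  rw [h, sum_insert (by decide), sum_insert (by decide), sum_singleton, add_assoc]

/-- The obedience conditional at a singleton is a combination of two indicators, each of which
factorizes over the members of an intersection. -/
lemma ksatOmega_single (γ : ℝ) (a : Bool) (S : Finset Bool) :
    ksatOmega γ (singleTok a) S =
      (if a ∈ S then 1 else 0) - γ * (if S = univ then 1 else 0) := by
  have h : ∀ (a : Bool) (S : Finset Bool),
      (S = univ ∧ a ∈ S ∧ (singleTok a).val ≠ S ∧ (singleTok a).val ⊂ S) ∨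
      (S ≠ univ ∧ a ∈ S ∧ (singleTok a).val = S) ∨
      (S ≠ univ ∧ a ∉ S ∧ (singleTok a).val ≠ S) := by decide
  have hu : ({false, true} : Finset Bool) = univ := by decide
  rcases h a S with ⟨h1, h2, h3, h4⟩ | ⟨h1, h2, h3⟩ | ⟨h1, h2, h3⟩
  · subst h1
    simp only [ksatOmega, hu, h2, h3, h4, false_and, and_self, if_true, if_false, mul_one]
  · simp only [ksatOmega, hu, h1, h2, h3, and_false, ne_eq, not_false_eq_true, and_self, if_true,
      if_false, mul_zero, sub_zero]
  · simp only [ksatOmega, hu, h1, h2, h3, and_false, false_and, if_false, mul_zero, sub_zero]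

lemma ksatOmega_full (γ : ℝ) (S : Finset Bool) :
    ksatOmega γ tok01 S = γ * (if S = univ then 1 else 0) := by
  have hu : ({false, true} : Finset Bool) = univ := by decide
  by_cases h : S = univ
  · simp [ksatOmega, hu, h, tok01]
  · simp only [ksatOmega, hu, h, tok01, Ne.symm h, and_false, false_and, if_false, mul_zero]

/-- Distributivity: summing over families of tokens the product of weights, restricted to families
whose members all satisfy `p`. -/
lemma sum_families {ι : Type} [Fintype ι] [DecidableEq ι] (p : ι → Token Bool → Prop)
    [∀ i, DecidablePred (p i)] (f : ι → Token Bool → ℝ) :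
    ∑ t : ι → Token Bool, (if ∀ i, p i (t i) then (1 : ℝ) else 0) * ∏ i, f i (t i) =
      ∏ i, ∑ s, if p i s then f i s else 0 := by
  rw [prod_univ_sum, Fintype.piFinset_univ]
  refine sum_congr rfl fun t _ => ?_
  rw [prod_ite_zero]
  simp

lemma inf_eq_univ {ι : Type} [Fintype ι] (t : ι → Token Bool) :
    (univ.inf fun i => (t i).val) = univ ↔ ∀ i, t i = tok01 := by
  have h : ∀ s : Token Bool, s.val = univ ↔ s = tok01 := by decide
  refine (Finset.inf_eq_top_iff _ _).trans ?_
  simp only [top_eq_univ, mem_univ, forall_const, h]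

lemma sum_full {ι : Type} [Fintype ι] [DecidableEq ι] (f : ι → Token Bool → ℝ) :
    ∑ t : ι → Token Bool,
        (if (univ.inf fun i => (t i).val) = univ then (1 : ℝ) else 0) * ∏ i, f i (t i) =
      ∏ i, f i tok01 := by
  simp only [inf_eq_univ]
  rw [sum_families (fun _ s => s = tok01)]
  simp

/-- The coordinate-to-constraint (and summary) update at a singleton token. -/
lemma sum_omega_single {ι : Type} [Fintype ι] [DecidableEq ι] (γ : ℝ) (a : Bool)
    (f : ι → Token Bool → ℝ) :
    ∑ t : ι → Token Bool,
        ksatOmega γ (singleTok a) (univ.inf fun i => (t i).val) * ∏ i, f i (t i) =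
      ∏ i, (f i (singleTok a) + f i tok01) - γ * ∏ i, f i tok01 := by
  simp only [ksatOmega_single, sub_mul, sum_sub_distrib, mul_assoc, ← mul_sum, sum_full]
  congr 1
  simp only [Finset.mem_inf, mem_univ, forall_const]
  rw [sum_families (fun _ s => a ∈ s.val)]
  refine prod_congr rfl fun i _ => ?_
  rw [sum_token]
  cases a <;> simp [tok0, tok1, tok01, singleTok]

lemma sum_omega_full {ι : Type} [Fintype ι] [DecidableEq ι] (γ : ℝ)
    (f : ι → Token Bool → ℝ) :
    ∑ t : ι → Token Bool,
        ksatOmega γ tok01 (univ.inf fun i => (t i).val) * ∏ i, f i (t i) =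
      γ * ∏ i, f i tok01 := by
  simp only [ksatOmega_full, mul_assoc, ← mul_sum, sum_full]

/-- A clause forces its preferred value at `v` exactly when every other coordinate is pinned to
its unpreferred value; otherwise it leaves `v` free. -/
lemma forced_ksat {V C : Type} [Fintype V] [DecidableEq V] (Vc : C → Finset V) (L : V → C → Bool) (c : C) (v : V) (hv : v ∈ Vc c)
    (t : {u // u ∈ (Vc c).erase v} → Token Bool) :
    forced (ksatGamma Vc L) Vc c v
        (fun w => if h : w ∈ (Vc c).erase v then (t ⟨w, h⟩).val else ∅) =
      if ∀ u, t u = singleTok (!(L u.val c)) then {L v c} else univ := by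
  have key : ∀ (s : Token Bool) (b : Bool), s ≠ singleTok (!b) → b ∈ s.val := by decide
  split_ifs with h
  · ext a
    simp only [forced, ksatGamma, mem_filter, mem_univ, true_and, mem_singleton]
    constructor
    · rintro ⟨x, hx, rfl, hxt⟩
      by_contra hne
      refine hx fun u hu => ?_
      by_cases huv : u = v
      · subst huv; revert hne; cases x u <;> cases L u c <;> simp
      · have hm : u ∈ (Vc c).erase v := mem_erase.2 ⟨huv, hu⟩
        have := hxt u hu huv
        rw [dif_pos hm, h ⟨u, hm⟩] at this
        simpa [singleTok] using this
    · rintro rfl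
      refine ⟨fun u => if u = v then L v c else !(L u c), fun hx => ?_, by simp, ?_⟩
      · have := hx v hv
        simp at this
      · intro u hu huv
        have hm : u ∈ (Vc c).erase v := mem_erase.2 ⟨huv, hu⟩
        rw [dif_pos hm, h ⟨u, hm⟩]
        simp [singleTok, huv]
  · push Not at h
    obtain ⟨u₀, hu₀⟩ := h
    refine eq_univ_of_forall fun a => ?_
    simp only [forced, ksatGamma, mem_filter, mem_univ, true_and]
    obtain ⟨hne, hmem⟩ := mem_erase.1 u₀.2
    -- The clause is satisfied at `u₀`; elsewhere any element of the token will do.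
    refine ⟨fun u => if u = v then a else if u = u₀.val then L u c else
      if h : u ∈ (Vc c).erase v then (t ⟨u, h⟩).2.choose else a, fun hx => ?_, by simp, ?_⟩
    · have := hx u₀.val hmem
      simp [hne] at this
    · intro u hu huv
      have hm : u ∈ (Vc c).erase v := mem_erase.2 ⟨huv, hu⟩
      rw [dif_pos hm]
      by_cases h0 : u = u₀.val
      · subst h0
        simpa [hne] using key _ _ hu₀
      · simpa only [huv, h0, hm, if_false, dif_pos] using (t ⟨u, hm⟩).2.choose_spec

lemma sum_pinned {ι : Type} [Fintype ι] [DecidableEq ι] (b : ι → Bool)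
    (f : ι → Token Bool → ℝ) :
    ∑ t : ι → Token Bool, (if ∀ i, t i = singleTok (b i) then ∏ i, f i (t i) else 0) =
      ∏ i, f i (singleTok (b i)) := by
  have := sum_families (fun i s => s = singleTok (b i)) f
  simpa [ite_mul] using this

lemma sum_unpinned {ι : Type} [Fintype ι] [DecidableEq ι] (b : ι → Bool)
    (f : ι → Token Bool → ℝ) (hf : ∀ i, f i tok0 + f i tok1 + f i tok01 = 1) :
    ∑ t : ι → Token Bool, (if ∀ i, t i = singleTok (b i) then 0 else ∏ i, f i (t i)) =
      1 - ∏ i, f i (singleTok (b i)) := by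
  have htot : ∑ t : ι → Token Bool, ∏ i, f i (t i) = 1 := by
    rw [← Fintype.piFinset_univ, ← prod_univ_sum]
    simp [sum_token, hf]
  rw [← sum_pinned, ← htot, ← sum_sub_distrib]
  refine sum_congr rfl fun t _ => ?_
  split_ifs <;> simp

lemma prod_pinned {V C : Type} (S : Finset V) (L : V → C → Bool) (c : C)
    (ln : V → C → Token Bool → ℝ) :
    ∏ u : {u // u ∈ S}, ln u.val c (singleTok (!(L u.val c))) =
      (∏ u ∈ S.filter (fun u => L u c = true), ln u c tok0) *
        ∏ u ∈ S.filter (fun u => L u c = false), ln u c tok1 := by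
  rw [prod_coe_sort S fun u => ln u c (singleTok (!(L u c))),
    ← prod_filter_mul_prod_filter_not S (fun u => L u c = true)]
  simp only [Bool.not_eq_true]
  congr 1 <;> refine prod_congr rfl fun u hu => ?_ <;> rw [(mem_filter.1 hu).2] <;> rfl

/-- For a k-SAT instance and `γ ∈ ℝ`, run weighted PTP with every
`ω_v` equal to the k-SAT obedience conditional of parameter `γ`.  Given arbitrary
normalized right messages `ρn` and normalized left messages `ln` summing to `1`, the
generic weighted-PTP update formulas (sums over families of tokens) evaluate to the
stated closed forms, for all pairs `(v-c)` and all `v`. -/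
theorem stmt6 (γ : ℝ) (k : ℕ) (Vc : C → Finset V) (L : V → C → Bool)
    (hk2 : 2 ≤ k) (hk : ∀ c : C, (Vc c).card = k)
    (hCv : ∀ v : V, 2 ≤ (Cv Vc v).card)
    (ρn : C → V → Token Bool → ℝ) (ln : V → C → Token Bool → ℝ)
    (hln : ∀ (u : V) (c : C), ln u c tok0 + ln u c tok1 + ln u c tok01 = 1) :
    ∀ v : V, ∀ c ∈ Cv Vc v,
      -- left-message update
      ((∑ tb : {b // b ∈ (Cv Vc v).erase c} → Token Bool,
          ksatOmega γ tok0 (univ.inf fun b => (tb b).val) *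
            ∏ b : {b // b ∈ (Cv Vc v).erase c}, ρn b.val v (tb b)) =
        (∏ b ∈ (Cv Vc v).erase c, (ρn b v tok0 + ρn b v tok01)) -
          γ * ∏ b ∈ (Cv Vc v).erase c, ρn b v tok01) ∧
      ((∑ tb : {b // b ∈ (Cv Vc v).erase c} → Token Bool,
          ksatOmega γ tok1 (univ.inf fun b => (tb b).val) *
            ∏ b : {b // b ∈ (Cv Vc v).erase c}, ρn b.val v (tb b)) =
        (∏ b ∈ (Cv Vc v).erase c, (ρn b v tok1 + ρn b v tok01)) -
          γ * ∏ b ∈ (Cv Vc v).erase c, ρn b v tok01) ∧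
      ((∑ tb : {b // b ∈ (Cv Vc v).erase c} → Token Bool,
          ksatOmega γ tok01 (univ.inf fun b => (tb b).val) *
            ∏ b : {b // b ∈ (Cv Vc v).erase c}, ρn b.val v (tb b)) =
        γ * ∏ b ∈ (Cv Vc v).erase c, ρn b v tok01) ∧
      -- right-message update
      ((∑ tu ∈ univ.filter (fun tu : {u // u ∈ (Vc c).erase v} → Token Bool =>
            forced (ksatGamma Vc L) Vc c v
              (fun w => if h : w ∈ (Vc c).erase v then (tu ⟨w, h⟩).val else ∅) =
              tok0.val),
          ∏ u : {u // u ∈ (Vc c).erase v}, ln u.val c (tu u)) =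
        (if L v c = false then (1 : ℝ) else 0) *
          ((∏ u ∈ ((Vc c).erase v).filter (fun u => L u c = true), ln u c tok0) *
            ∏ u ∈ ((Vc c).erase v).filter (fun u => L u c = false), ln u c tok1)) ∧
      ((∑ tu ∈ univ.filter (fun tu : {u // u ∈ (Vc c).erase v} → Token Bool =>
            forced (ksatGamma Vc L) Vc c v
              (fun w => if h : w ∈ (Vc c).erase v then (tu ⟨w, h⟩).val else ∅) =
              tok1.val),
          ∏ u : {u // u ∈ (Vc c).erase v}, ln u.val c (tu u)) =
        (if L v c = true then (1 : ℝ) else 0) *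
          ((∏ u ∈ ((Vc c).erase v).filter (fun u => L u c = true), ln u c tok0) *
            ∏ u ∈ ((Vc c).erase v).filter (fun u => L u c = false), ln u c tok1)) ∧
      ((∑ tu ∈ univ.filter (fun tu : {u // u ∈ (Vc c).erase v} → Token Bool =>
            forced (ksatGamma Vc L) Vc c v
              (fun w => if h : w ∈ (Vc c).erase v then (tu ⟨w, h⟩).val else ∅) =
              tok01.val),
          ∏ u : {u // u ∈ (Vc c).erase v}, ln u.val c (tu u)) =
        1 - (∏ u ∈ ((Vc c).erase v).filter (fun u => L u c = true), ln u c tok0) *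
              ∏ u ∈ ((Vc c).erase v).filter (fun u => L u c = false), ln u c tok1) ∧
      -- summary update
      ((∑ tc : {b // b ∈ Cv Vc v} → Token Bool,
          ksatOmega γ tok0 (univ.inf fun b => (tc b).val) *
            ∏ b : {b // b ∈ Cv Vc v}, ρn b.val v (tc b)) =
        (∏ b ∈ Cv Vc v, (ρn b v tok0 + ρn b v tok01)) -
          γ * ∏ b ∈ Cv Vc v, ρn b v tok01) ∧
      ((∑ tc : {b // b ∈ Cv Vc v} → Token Bool,
          ksatOmega γ tok1 (univ.inf fun b => (tc b).val) *
            ∏ b : {b // b ∈ Cv Vc v}, ρn b.val v (tc b)) =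
        (∏ b ∈ Cv Vc v, (ρn b v tok1 + ρn b v tok01)) -
          γ * ∏ b ∈ Cv Vc v, ρn b v tok01) ∧
      ((∑ tc : {b // b ∈ Cv Vc v} → Token Bool,
          ksatOmega γ tok01 (univ.inf fun b => (tc b).val) *
            ∏ b : {b // b ∈ Cv Vc v}, ρn b.val v (tc b)) =
        γ * ∏ b ∈ Cv Vc v, ρn b v tok01) := by
  intro v c hc
  have hv : v ∈ Vc c := (mem_filter.1 hc).2
  have h0 (S : Finset C) := sum_omega_single γ false fun (b : {b // b ∈ S}) => ρn b.val v
  have h1 (S : Finset C) := sum_omega_single γ true fun (b : {b // b ∈ S}) => ρn b.val v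
  have h01 (S : Finset C) := sum_omega_full γ fun (b : {b // b ∈ S}) => ρn b.val v
  have e0 : singleTok false = tok0 := rfl
  have e1 : singleTok true = tok1 := rfl
  have hP := prod_pinned ((Vc c).erase v) L c ln
  have hpin := sum_pinned (fun u : {u // u ∈ (Vc c).erase v} => !(L u.val c))
    fun u => ln u.val c
  have hunpin := sum_unpinned (fun u : {u // u ∈ (Vc c).erase v} => !(L u.val c))
    (fun u => ln u.val c) fun u => hln u.val c
  -- Over an attached finset, a product equals the product over the finset itself.
  have hprod (S : Finset C) (g : C → ℝ) : ∏ b : {b // b ∈ S}, g b.val = ∏ b ∈ S, g b :=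
    prod_coe_sort S g
  simp only [e0, e1, hprod _ fun b => ρn b v tok0 + ρn b v tok01,
    hprod _ fun b => ρn b v tok1 + ρn b v tok01, hprod _ fun b => ρn b v tok01] at h0 h1 h01
  refine ⟨h0 _, h1 _, h01 _, ?_, ?_, ?_, h0 _, h1 _, h01 _⟩ <;>
    rw [← hP] <;> simp only [forced_ksat Vc L c v hv, sum_filter]
  · rw [← hpin, mul_sum]
    refine sum_congr rfl fun t _ => ?_
    have hu : (univ : Finset Bool) ≠ tok0.val := by decide
    have hL : ({L v c} : Finset Bool) = tok0.val ↔ L v c = false := singleton_inj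
    by_cases hp : ∀ u, t u = singleTok (!(L u.val c))
    · simp only [if_pos hp, hL, ite_mul, one_mul, zero_mul]
    · simp only [if_neg hp, if_neg hu, mul_zero]
  · rw [← hpin, mul_sum]
    refine sum_congr rfl fun t _ => ?_
    have hu : (univ : Finset Bool) ≠ tok1.val := by decide
    have hL : ({L v c} : Finset Bool) = tok1.val ↔ L v c = true := singleton_inj
    by_cases hp : ∀ u, t u = singleTok (!(L u.val c))
    · simp only [if_pos hp, hL, ite_mul, one_mul, zero_mul]
    · simp only [if_neg hp, if_neg hu, mul_zero]
  · rw [← hunpin]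
    refine sum_congr rfl fun t _ => ?_
    have hu : (univ : Finset Bool) = tok01.val := by decide
    have hL : ({L v c} : Finset Bool) ≠ tok01.val := by cases L v c <;> decide
    by_cases hp : ∀ u, t u = singleTok (!(L u.val c))
    · simp only [if_pos hp, if_neg hL]
    · simp only [if_neg hp, if_pos hu]
end

section
/- Consider a k-SAT instance and γ ∈ [0,1]. Let SP*(γ) messages and k-SAT weighted PTP messages evolve in parallel: at each iteration, SP*(γ) updates all triples (Π^u, Π^s, Π^*) from the current η and then all η from the new triples and computes the summaries ζ from the current η, while weighted PTP updates all left messages λ from the current normalized right messages, then all right messages ρ from the new normalized left messages, and computes the summaries μ from the current normalized right messages. Assume throughout that all PTP messages are nonnegative with nonzero normalizing sums and all SP* denominators are nonzero. If at some iteration the right correspondence η_{c→v} = ρ^norm_{c→v}({0}) + ρ^norm_{c→v}({1}) holds for every pair (v-c), then at that iteration and all subsequent ones: Π^{s,norm}_{v→c} = [L_{v,c}=0]·λ^norm_{v→c}({0}) + [L_{v,c}=1]·λ^norm_{v→c}({1}); Π^{u,norm}_{v→c} = [L_{v,c}=0]·λ^norm_{v→c}({1}) + [L_{v,c}=1]·λ^norm_{v→c}({0});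 Π^{*,norm}_{v→c} = λ^norm_{v→c}({0,1}); η_{c→v} = ρ^norm_{c→v}({0}) + ρ^norm_{c→v}({1}); and ζ^0_v = μ_v({0}), ζ^1_v = μ_v({1}), ζ^*_v = μ_v({0,1}) for every v ∈ V. -/
/-!
The unnormalized right messages already sum to `P + (1 - P) = 1`, so normalization leaves them
unchanged and `ρ({0}) + ρ({1}) = P`, `ρ({0,1}) = 1 - P`. Under the right correspondence this reads
`ρ({0,1}) = 1 - η`, while `ρ({i}) + ρ({0,1})` is `1` if `L = i` and `1 - η` otherwise
(`corr_of_right`). Hence a product of `ρ({0}) + ρ({0,1})` over a set of clauses is the product of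
`1 - η` over those clauses in the set that prefer `1`, and symmetrically for `{1}`; a product over
the whole set splits along the preferred value. This identifies the summaries
(`summary_of_corr`) and, even before normalization, the triples `Π` with the new left messages
(`left_of_corr`). The new `η` is the product of the normalized `Π^u`, which is the new `P`, so
the right correspondence propagates by induction.
-/

open Finset

variable {V C : Type} [Fintype V] [DecidableEq V] [Fintype C] [DecidableEq C]

/-- `C_c^s(v)`. -/
def Cs (Vc : C → Finset V) (L : V → C → Bool) (v : V) (c : C) : Finset C :=
  ((Cv Vc v).erase c).filter fun b => L v b = L v c

/-- `C_c^u(v)`. -/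
def Cu (Vc : C → Finset V) (L : V → C → Bool) (v : V) (c : C) : Finset C :=
  ((Cv Vc v).erase c).filter fun b => L v b ≠ L v c

/-- `C^1(v)`. -/
def C1 (Vc : C → Finset V) (L : V → C → Bool) (v : V) : Finset C :=
  (Cv Vc v).filter fun b => L v b = true

/-- `C^0(v)`. -/
def C0 (Vc : C → Finset V) (L : V → C → Bool) (v : V) : Finset C :=
  (Cv Vc v).filter fun b => L v b = false

/-- `P_{c,v}` computed from normalized left messages `ln`. -/
def Pcv (Vc : C → Finset V) (L : V → C → Bool) (ln : V → C → Token Bool → ℝ)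
    (c : C) (v : V) : ℝ :=
  (∏ u ∈ ((Vc c).erase v).filter (fun u => L u c = true), ln u c tok0) *
    ∏ u ∈ ((Vc c).erase v).filter (fun u => L u c = false), ln u c tok1

/-- The k-SAT weighted-PTP right update computed from normalized left messages. -/
def ptpR (Vc : C → Finset V) (L : V → C → Bool) (ln : V → C → Token Bool → ℝ) :
    C → V → Token Bool → ℝ := fun c v t =>
  if t = tok0 then (if L v c = false then (1 : ℝ) else 0) * Pcv Vc L ln c v
  else if t = tok1 then (if L v c = true then (1 : ℝ) else 0) * Pcv Vc L ln c v
  else 1 - Pcv Vc L ln c v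

/-- The k-SAT weighted-PTP left update computed from normalized right messages. -/
def ptpL (γ : ℝ) (Vc : C → Finset V) (rn : C → V → Token Bool → ℝ) :
    V → C → Token Bool → ℝ := fun v c t =>
  if t = tok0 then
    (∏ b ∈ (Cv Vc v).erase c, (rn b v tok0 + rn b v tok01)) -
      γ * ∏ b ∈ (Cv Vc v).erase c, rn b v tok01
  else if t = tok1 then
    (∏ b ∈ (Cv Vc v).erase c, (rn b v tok1 + rn b v tok01)) -
      γ * ∏ b ∈ (Cv Vc v).erase c, rn b v tok01
  else γ * ∏ b ∈ (Cv Vc v).erase c, rn b v tok01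

/-- The k-SAT weighted-PTP summary computed from normalized right messages. -/
def ptpMu (γ : ℝ) (Vc : C → Finset V) (rn : C → V → Token Bool → ℝ) :
    V → Token Bool → ℝ := fun v t =>
  if t = tok0 then
    (∏ c ∈ Cv Vc v, (rn c v tok0 + rn c v tok01)) - γ * ∏ c ∈ Cv Vc v, rn c v tok01
  else if t = tok1 then
    (∏ c ∈ Cv Vc v, (rn c v tok1 + rn c v tok01)) - γ * ∏ c ∈ Cv Vc v, rn c v tok01
  else γ * ∏ c ∈ Cv Vc v, rn c v tok01

/-- Normalization of left messages: `m^norm := m/(m({0})+m({1})+m({0,1}))`. -/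
noncomputable def normL (l : V → C → Token Bool → ℝ) : V → C → Token Bool → ℝ :=
  fun v c t => l v c t / (l v c tok0 + l v c tok1 + l v c tok01)

/-- Normalization of right messages. -/
noncomputable def normR (r : C → V → Token Bool → ℝ) : C → V → Token Bool → ℝ :=
  fun c v t => r c v t / (r c v tok0 + r c v tok1 + r c v tok01)

/-- The sequence of weighted-PTP left messages: `lamSeq 0` is the initial left
message, and within iteration `n+1` the left messages `lamSeq (n+1)` are computed
from the normalized right messages of iteration `n`. -/
noncomputable def lamSeq (γ : ℝ) (Vc : C → Finset V) (L : V → C → Bool)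
    (l0 : V → C → Token Bool → ℝ) : ℕ → V → C → Token Bool → ℝ :=
  fun n => (fun l => ptpL γ Vc (normR (ptpR Vc L (normL l))))^[n] l0

/-- The weighted-PTP right messages of iteration `n`, computed from the normalized
left messages of iteration `n`. -/
noncomputable def rhoAt (γ : ℝ) (Vc : C → Finset V) (L : V → C → Bool)
    (l0 : V → C → Token Bool → ℝ) (n : ℕ) : C → V → Token Bool → ℝ :=
  ptpR Vc L (normL (lamSeq γ Vc L l0 n))

/-- `∏_{b ∈ C_c^s(v)} (1 - η_{b→v})`. -/
def Psv (Vc : C → Finset V) (L : V → C → Bool) (η : C → V → ℝ) (v : V) (c : C) : ℝ :=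
  ∏ b ∈ Cs Vc L v c, (1 - η b v)

/-- `∏_{b ∈ C_c^u(v)} (1 - η_{b→v})`. -/
def Puv (Vc : C → Finset V) (L : V → C → Bool) (η : C → V → ℝ) (v : V) (c : C) : ℝ :=
  ∏ b ∈ Cu Vc L v c, (1 - η b v)

/-- `Π^u_{v→c}` of SP*(γ). -/
def piU (γ : ℝ) (Vc : C → Finset V) (L : V → C → Bool) (η : C → V → ℝ)
    (v : V) (c : C) : ℝ :=
  (1 - γ * Puv Vc L η v c) * Psv Vc L η v c

/-- `Π^s_{v→c}` of SP*(γ). -/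
def piS (γ : ℝ) (Vc : C → Finset V) (L : V → C → Bool) (η : C → V → ℝ)
    (v : V) (c : C) : ℝ :=
  (1 - γ * Psv Vc L η v c) * Puv Vc L η v c

/-- `Π^*_{v→c}` of SP*(γ): `γ·∏_{b∈C(v)∖{c}}(1−η_{b→v})`. -/
def piStar (γ : ℝ) (Vc : C → Finset V) (L : V → C → Bool) (η : C → V → ℝ)
    (v : V) (c : C) : ℝ :=
  γ * ∏ b ∈ (Cv Vc v).erase c, (1 - η b v)

/-- One SP*(γ) iteration on the right messages: the triples are updated from the
current `η` and then `η` is updated from the new triples. -/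
noncomputable def spStep (γ : ℝ) (Vc : C → Finset V) (L : V → C → Bool)
    (η : C → V → ℝ) : C → V → ℝ := fun c v =>
  ∏ u ∈ (Vc c).erase v,
    piU γ Vc L η u c /
      (piU γ Vc L η u c + piS γ Vc L η u c + piStar γ Vc L η u c)

/-- Summary `ζ^1_v` computed from right messages `η`. -/
def zeta1 (γ : ℝ) (Vc : C → Finset V) (L : V → C → Bool) (η : C → V → ℝ) (v : V) : ℝ :=
  (1 - γ * ∏ b ∈ C1 Vc L v, (1 - η b v)) * ∏ b ∈ C0 Vc L v, (1 - η b v)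

/-- Summary `ζ^0_v`. -/
def zeta0 (γ : ℝ) (Vc : C → Finset V) (L : V → C → Bool) (η : C → V → ℝ) (v : V) : ℝ :=
  (1 - γ * ∏ b ∈ C0 Vc L v, (1 - η b v)) * ∏ b ∈ C1 Vc L v, (1 - η b v)

/-- Summary `ζ^*_v`. -/
def zetaStar (γ : ℝ) (Vc : C → Finset V) (L : V → C → Bool) (η : C → V → ℝ) (v : V) : ℝ :=
  γ * ∏ b ∈ Cv Vc v, (1 - η b v)

lemma tok1_ne_tok0 : tok1 ≠ tok0 := by decide
lemma tok01_ne_tok0 : tok01 ≠ tok0 := by decide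
lemma tok01_ne_tok1 : tok01 ≠ tok1 := by decide

lemma normR_ptpR (Vc : C → Finset V) (L : V → C → Bool) (ln : V → C → Token Bool → ℝ) :
    normR (ptpR Vc L ln) = ptpR Vc L ln := by
  funext c v t
  have h : ptpR Vc L ln c v tok0 + ptpR Vc L ln c v tok1 + ptpR Vc L ln c v tok01 = 1 := by
    simp only [ptpR, tok1_ne_tok0, tok01_ne_tok0, tok01_ne_tok1, if_true, if_false]
    cases L v c <;> simp
  simp only [normR, h, div_one]

lemma ptpR_tok0_add_tok1 (Vc : C → Finset V) (L : V → C → Bool)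
    (ln : V → C → Token Bool → ℝ) (c : C) (v : V) :
    ptpR Vc L ln c v tok0 + ptpR Vc L ln c v tok1 = Pcv Vc L ln c v := by
  simp only [ptpR, tok1_ne_tok0, if_true, if_false]
  cases L v c <;> simp

/-- The form in which the right correspondence is used: at the pair `(v-c)`, the right message `r`
puts `1 - η` on `{0,1}` and the remaining mass `η` on the preferred value. -/
def Corr (Vc : C → Finset V) (L : V → C → Bool) (η : C → V → ℝ)
    (r : C → V → Token Bool → ℝ) : Prop :=
  ∀ v : V, ∀ c ∈ Cv Vc v,
    r c v tok01 = 1 - η c v ∧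
    r c v tok0 + r c v tok01 = (if L v c = true then 1 - η c v else 1) ∧
    r c v tok1 + r c v tok01 = (if L v c = false then 1 - η c v else 1)

lemma corr_of_right (Vc : C → Finset V) (L : V → C → Bool) (η : C → V → ℝ)
    (ln : V → C → Token Bool → ℝ)
    (h : ∀ v : V, ∀ c ∈ Cv Vc v, η c v =
      normR (ptpR Vc L ln) c v tok0 + normR (ptpR Vc L ln) c v tok1) :
    Corr Vc L η (normR (ptpR Vc L ln)) := by
  intro v c hc
  have e := h v c hc
  rw [normR_ptpR, ptpR_tok0_add_tok1] at e
  rw [normR_ptpR, e]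
  simp only [ptpR, tok1_ne_tok0, tok01_ne_tok0, tok01_ne_tok1, if_true, if_false]
  cases L v c <;> simp

/-- The three products of normalized right messages over a set `S` of clauses containing `v`. -/
lemma prods_of_corr {Vc : C → Finset V} {L : V → C → Bool} {η : C → V → ℝ}
    {r : C → V → Token Bool → ℝ} (h : Corr Vc L η r) (v : V) {S : Finset C}
    (hS : S ⊆ Cv Vc v) :
    (∏ b ∈ S, (r b v tok0 + r b v tok01) = ∏ b ∈ S with L v b = true, (1 - η b v)) ∧
    (∏ b ∈ S, (r b v tok1 + r b v tok01) = ∏ b ∈ S with L v b = false, (1 - η b v)) ∧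
    (∏ b ∈ S, r b v tok01 = ∏ b ∈ S, (1 - η b v)) ∧
    (∏ b ∈ S, (1 - η b v) = (∏ b ∈ S with L v b = true, (1 - η b v)) *
      ∏ b ∈ S with L v b = false, (1 - η b v)) := by
  refine ⟨?_, ?_, ?_, ?_⟩
  · rw [prod_filter]
    exact prod_congr rfl fun b hb => (h v b (hS hb)).2.1
  · rw [prod_filter]
    exact prod_congr rfl fun b hb => (h v b (hS hb)).2.2
  · exact prod_congr rfl fun b hb => (h v b (hS hb)).1
  · rw [← prod_filter_mul_prod_filter_not S (fun b => L v b = true)]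
    simp only [Bool.not_eq_true]

lemma summary_of_corr {Vc : C → Finset V} {L : V → C → Bool} {η : C → V → ℝ}
    {r : C → V → Token Bool → ℝ} (γ : ℝ) (h : Corr Vc L η r) (v : V) :
    zeta0 γ Vc L η v = ptpMu γ Vc r v tok0 ∧
    zeta1 γ Vc L η v = ptpMu γ Vc r v tok1 ∧
    zetaStar γ Vc L η v = ptpMu γ Vc r v tok01 := by
  obtain ⟨h0, h1, h01, hs⟩ := prods_of_corr h v (Subset.refl (Cv Vc v))
  simp only [zeta0, zeta1, zetaStar, C0, C1, ptpMu, tok1_ne_tok0, tok01_ne_tok0, tok01_ne_tok1,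
    if_true, if_false, h0, h1, h01, hs, and_true]
  constructor <;> ring

/-- Before normalization, the SP* triple is the new PTP left message, with `s` and `u` standing for
the preferred and the opposite value. -/
lemma left_of_corr {Vc : C → Finset V} {L : V → C → Bool} {η : C → V → ℝ}
    {r : C → V → Token Bool → ℝ} (γ : ℝ) (h : Corr Vc L η r) (v : V) (c : C) :
    piS γ Vc L η v c = ptpL γ Vc r v c (if L v c = true then tok1 else tok0) ∧
    piU γ Vc L η v c = ptpL γ Vc r v c (if L v c = true then tok0 else tok1) ∧
    piStar γ Vc L η v c = ptpL γ Vc r v c tok01 := by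
  obtain ⟨h0, h1, h01, hs⟩ := prods_of_corr h v (erase_subset c (Cv Vc v))
  simp only [piS, piU, piStar, Psv, Puv, Cs, Cu]
  cases L v c <;>
  simp only [ptpL, tok1_ne_tok0, tok01_ne_tok0, tok01_ne_tok1, if_true, if_false, h0, h1, h01, hs,
    and_true, ne_eq, Bool.not_eq_true, Bool.not_eq_false, Bool.false_eq_true] <;>
  constructor <;> ring

lemma norm_left_of_corr {Vc : C → Finset V} {L : V → C → Bool} {η : C → V → ℝ}
    {r : C → V → Token Bool → ℝ} (γ : ℝ) (h : Corr Vc L η r) (v : V) (c : C) :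
    piS γ Vc L η v c / (piU γ Vc L η v c + piS γ Vc L η v c + piStar γ Vc L η v c) =
      (if L v c = false then (1 : ℝ) else 0) * normL (ptpL γ Vc r) v c tok0 +
        (if L v c = true then (1 : ℝ) else 0) * normL (ptpL γ Vc r) v c tok1 ∧
    piU γ Vc L η v c / (piU γ Vc L η v c + piS γ Vc L η v c + piStar γ Vc L η v c) =
      (if L v c = false then (1 : ℝ) else 0) * normL (ptpL γ Vc r) v c tok1 +
        (if L v c = true then (1 : ℝ) else 0) * normL (ptpL γ Vc r) v c tok0 ∧
    piStar γ Vc L η v c / (piU γ Vc L η v c + piS γ Vc L η v c + piStar γ Vc L η v c) =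
      normL (ptpL γ Vc r) v c tok01 := by
  obtain ⟨hs, hu, hst⟩ := left_of_corr γ h v c
  rw [hs, hu, hst]
  cases L v c <;> simp [normL, add_comm]

lemma spStep_of_corr {Vc : C → Finset V} {L : V → C → Bool} {η : C → V → ℝ}
    {r : C → V → Token Bool → ℝ} (γ : ℝ) (h : Corr Vc L η r) (c : C) (v : V) :
    spStep γ Vc L η c v = Pcv Vc L (normL (ptpL γ Vc r)) c v := by
  simp only [spStep, Pcv, (norm_left_of_corr γ h _ c).2.1]
  rw [← prod_filter_mul_prod_filter_not ((Vc c).erase v) (fun u => L u c = true)]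
  simp only [Bool.not_eq_true]
  congr 1 <;> refine prod_congr rfl fun u hu => ?_ <;> simp [(mem_filter.1 hu).2]

/-- For a k-SAT instance and `γ ∈ [0,1]`, let SP*(γ) right messages
`η` evolve by `spStep` and weighted-PTP messages evolve in parallel (left messages
from the current normalized right messages, right messages from the new normalized
left messages, summaries from the current normalized right messages), with all PTP
messages nonnegative with nonzero normalizing sums and all SP* denominators nonzero
throughout.  If at some iteration `n₀` the right correspondence
`η_{c→v} = ρ^norm_{c→v}({0}) + ρ^norm_{c→v}({1})` holds for every pair `(v-c)`, then
at that iteration and all subsequent ones the right correspondence holds, the summary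
triples satisfy `ζ^0 = μ({0})`, `ζ^1 = μ({1})`, `ζ^* = μ({0,1})`, and the (normalized)
SP* triples computed in the following iteration correspond to the normalized PTP left
messages computed in the following iteration as stated. -/
theorem stmt8 (γ : ℝ) (hγ0 : 0 ≤ γ) (hγ1 : γ ≤ 1)
    (k : ℕ) (Vc : C → Finset V) (L : V → C → Bool)
    (hk2 : 2 ≤ k) (hk : ∀ c : C, (Vc c).card = k)
    (hCv : ∀ v : V, 2 ≤ (Cv Vc v).card)
    (η0 : C → V → ℝ) (l0 : V → C → Token Bool → ℝ)
    -- all PTP messages are nonnegative throughout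
    (hnnL : ∀ (n : ℕ) (v : V) (c : C) (t : Token Bool), 0 ≤ lamSeq γ Vc L l0 n v c t)
    (hnnR : ∀ (n : ℕ) (c : C) (v : V) (t : Token Bool), 0 ≤ rhoAt γ Vc L l0 n c v t)
    -- all PTP normalizing sums are nonzero throughout
    (hnzL : ∀ (n : ℕ) (v : V) (c : C),
      lamSeq γ Vc L l0 n v c tok0 + lamSeq γ Vc L l0 n v c tok1 +
        lamSeq γ Vc L l0 n v c tok01 ≠ 0)
    (hnzR : ∀ (n : ℕ) (c : C) (v : V),
      rhoAt γ Vc L l0 n c v tok0 + rhoAt γ Vc L l0 n c v tok1 +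
        rhoAt γ Vc L l0 n c v tok01 ≠ 0)
    -- all SP* denominators are nonzero throughout
    (hnzSP : ∀ (n : ℕ) (u : V), ∀ c ∈ Cv Vc u,
      piU γ Vc L ((spStep γ Vc L)^[n] η0) u c +
        piS γ Vc L ((spStep γ Vc L)^[n] η0) u c +
        piStar γ Vc L ((spStep γ Vc L)^[n] η0) u c ≠ 0)
    -- the right correspondence at some iteration n₀
    (n₀ : ℕ)
    (hcorr : ∀ v : V, ∀ c ∈ Cv Vc v,
      ((spStep γ Vc L)^[n₀] η0) c v =
        normR (rhoAt γ Vc L l0 n₀) c v tok0 + normR (rhoAt γ Vc L l0 n₀) c v tok1) :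
    ∀ n : ℕ, n₀ ≤ n →
      -- the right correspondence
      (∀ v : V, ∀ c ∈ Cv Vc v,
        ((spStep γ Vc L)^[n] η0) c v =
          normR (rhoAt γ Vc L l0 n) c v tok0 + normR (rhoAt γ Vc L l0 n) c v tok1) ∧
      -- the summary correspondence
      (∀ v : V,
        zeta0 γ Vc L ((spStep γ Vc L)^[n] η0) v =
          ptpMu γ Vc (normR (rhoAt γ Vc L l0 n)) v tok0 ∧
        zeta1 γ Vc L ((spStep γ Vc L)^[n] η0) v =
          ptpMu γ Vc (normR (rhoAt γ Vc L l0 n)) v tok1 ∧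
        zetaStar γ Vc L ((spStep γ Vc L)^[n] η0) v =
          ptpMu γ Vc (normR (rhoAt γ Vc L l0 n)) v tok01) ∧
      -- the left correspondence (for the triples and left messages computed in the
      -- next iteration from the iteration-`n` right messages)
      (∀ v : V, ∀ c ∈ Cv Vc v,
        piS γ Vc L ((spStep γ Vc L)^[n] η0) v c /
            (piU γ Vc L ((spStep γ Vc L)^[n] η0) v c +
              piS γ Vc L ((spStep γ Vc L)^[n] η0) v c +
              piStar γ Vc L ((spStep γ Vc L)^[n] η0) v c) =
          (if L v c = false then (1 : ℝ) else 0) *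
              normL (lamSeq γ Vc L l0 (n + 1)) v c tok0 +
            (if L v c = true then (1 : ℝ) else 0) *
              normL (lamSeq γ Vc L l0 (n + 1)) v c tok1 ∧
        piU γ Vc L ((spStep γ Vc L)^[n] η0) v c /
            (piU γ Vc L ((spStep γ Vc L)^[n] η0) v c +
              piS γ Vc L ((spStep γ Vc L)^[n] η0) v c +
              piStar γ Vc L ((spStep γ Vc L)^[n] η0) v c) =
          (if L v c = false then (1 : ℝ) else 0) *
              normL (lamSeq γ Vc L l0 (n + 1)) v c tok1 +
            (if L v c = true then (1 : ℝ) else 0) *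
              normL (lamSeq γ Vc L l0 (n + 1)) v c tok0 ∧
        piStar γ Vc L ((spStep γ Vc L)^[n] η0) v c /
            (piU γ Vc L ((spStep γ Vc L)^[n] η0) v c +
              piS γ Vc L ((spStep γ Vc L)^[n] η0) v c +
              piStar γ Vc L ((spStep γ Vc L)^[n] η0) v c) =
          normL (lamSeq γ Vc L l0 (n + 1)) v c tok01) := by
  have hlam : ∀ n, lamSeq γ Vc L l0 (n + 1) = ptpL γ Vc (normR (rhoAt γ Vc L l0 n)) :=
    fun n => Function.iterate_succ_apply' _ n l0
  have hright : ∀ n, n₀ ≤ n → ∀ v : V, ∀ c ∈ Cv Vc v, ((spStep γ Vc L)^[n] η0) c v =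
      normR (rhoAt γ Vc L l0 n) c v tok0 + normR (rhoAt γ Vc L l0 n) c v tok1 := by
    intro n hn
    induction n, hn using Nat.le_induction with
    | base => exact hcorr
    | succ n _ ih =>
      intro v c _
      rw [Function.iterate_succ_apply', spStep_of_corr γ (corr_of_right Vc L _ _ ih)]
      rw [show rhoAt γ Vc L l0 (n + 1) = ptpR Vc L (normL (lamSeq γ Vc L l0 (n + 1))) from rfl,
        normR_ptpR Vc L (normL (lamSeq γ Vc L l0 (n + 1))), ptpR_tok0_add_tok1, hlam, rhoAt]
  intro n hn
  have hC := corr_of_right Vc L _ _ (hright n hn)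
  refine ⟨hright n hn, fun v => summary_of_corr γ hC v, fun v c _ => ?_⟩
  rw [hlam]
  exact norm_left_of_corr γ hC v c
end

section
/- Consider the 3-COL CSP of a graph G = (Δ, Ξ). Let nonnegative left messages λ_{u→c} (one for each vertex u and incident edge c) with nonzero normalizing sums be given. Compute right messages ρ by the 3-COL PTP right update from λ^norm, assume each ρ_{c→v} has nonzero normalizing sum; compute λ' by the 3-COL PTP left update from ρ^norm and μ by the 3-COL PTP summary update from ρ^norm, and assume each λ'_{u→c} and each μ_v has nonzero normalizing sum. For each ordered pair (u,v) with {u,v} ∈ Ξ define η^i_{u→v} := λ^norm_{u→{u,v}}({i}) for i = 1,2,3 and η^*_{u→v} := 1 − Σ_{j=1,2,3} η^j_{u→v}, and define η'^i_{u→v} := λ'^norm_{u→{u,v}}({i}) and η'^*_{u→v} := 1 − Σ_{j=1,2,3} η'^j_{u→v}. Then (η', η'^*) is obtained from (η, η^*) by the SP 3-COL update, the denominator of the SP update formula for η'^i_{u→v} being equal to the normalizing sum Σ_T λ'_{u→{u,v}}(T) (hence nonzero); moreover μ^norm_v({i}) = ζ^i_v for i = 1,2,3 and 1 − Σ_{j=1,2,3}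 μ^norm_v({j}) = ζ^*_v, where ζ^i_v and ζ^*_v are computed from (η, η^*) by the SP 3-COL summary formulas. -/
/-!
The right update preserves total mass: each `ρ_{c→v}` puts `η^k` on the token `{i,j}`, the mass `η^*`
of all tokens with at least two colors on `{1,2,3}`, and nothing on singletons. Hence `ρ` sums
to `1` and `ρ^norm = ρ` (`nrm_rho`). Substituting these values, the three products in the left update
have factors `η^j + η^k + η^* = 1 - η^i`, `η^k + η^*` and `η^*`, so `λ'({i})` is the SP numerator, and
adding up the seven tokens, the inclusion-exclusion terms collapse to the SP denominator.
Left update and summary differ only in the set of neighbors over which products range, so both are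
instances of `update_eq`, stated for an arbitrary set `S` of neighbors.
-/

open Finset

/-- A token: a nonempty subset of the three-color alphabet `χ = {1,2,3}`
(modelled as `Fin 3`). -/
abbrev Tok3 := {s : Finset (Fin 3) // s.Nonempty}

/-- The singleton token `{i}`. -/
def sTok (i : Fin 3) : Tok3 := ⟨{i}, Finset.singleton_nonempty i⟩
/-- The two-element token `{i,j}`. -/
def pTok (i j : Fin 3) : Tok3 := ⟨{i, j}, Finset.insert_nonempty i {j}⟩
/-- The token `{1,2,3}`. -/
def uTok : Tok3 := ⟨Finset.univ, Finset.univ_nonempty⟩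

/-- The normalizing sum of a message: `Σ_T m(T)` over the seven tokens. -/
def tokSum (m : Tok3 → ℝ) : ℝ := ∑ t : Tok3, m t

/-- The normalization `m^norm = m / (Σ_T m(T))` of a message. -/
noncomputable def nrm (m : Tok3 → ℝ) : Tok3 → ℝ := fun t => m t / tokSum m

variable {Δ : Type} [Fintype Δ] [DecidableEq Δ]

/-- `η^i_{u→v} := λ^norm_{u→{u,v}}({i})`. -/
noncomputable def etaOf (lam : Δ → Δ → Tok3 → ℝ) (i : Fin 3) (u v : Δ) : ℝ :=
  nrm (lam u v) (sTok i)

/-- `η^*_{u→v} := 1 − Σ_{j=1,2,3} η^j_{u→v}`. -/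
noncomputable def etaStarOf (lam : Δ → Δ → Tok3 → ℝ) (u v : Δ) : ℝ :=
  1 - ∑ j : Fin 3, nrm (lam u v) (sTok j)

/-- Numerator of the SP 3-COL update formula for `η^i_{u→v}`. -/
noncomputable def spNum (G : SimpleGraph Δ) [DecidableRel G.Adj]
    (lam : Δ → Δ → Tok3 → ℝ) (i : Fin 3) (u v : Δ) : ℝ :=
  (∏ w ∈ (G.neighborFinset u).erase v, (1 - etaOf lam i w u)) -
    (∑ j ∈ univ.erase i,
      ∏ w ∈ (G.neighborFinset u).erase v, (etaStarOf lam w u + etaOf lam j w u)) +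
    ∏ w ∈ (G.neighborFinset u).erase v, etaStarOf lam w u

/-- Denominator of the SP 3-COL update formula for `η^i_{u→v}`. -/
noncomputable def spDen (G : SimpleGraph Δ) [DecidableRel G.Adj]
    (lam : Δ → Δ → Tok3 → ℝ) (u v : Δ) : ℝ :=
  (∑ j : Fin 3, ∏ w ∈ (G.neighborFinset u).erase v, (1 - etaOf lam j w u)) -
    (∑ j : Fin 3,
      ∏ w ∈ (G.neighborFinset u).erase v, (etaStarOf lam w u + etaOf lam j w u)) +
    ∏ w ∈ (G.neighborFinset u).erase v, etaStarOf lam w u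

/-- Numerator of the SP 3-COL summary formula for `ζ^i_v`. -/
noncomputable def spNumSum (G : SimpleGraph Δ) [DecidableRel G.Adj]
    (lam : Δ → Δ → Tok3 → ℝ) (i : Fin 3) (v : Δ) : ℝ :=
  (∏ u ∈ G.neighborFinset v, (1 - etaOf lam i u v)) -
    (∑ j ∈ univ.erase i,
      ∏ u ∈ G.neighborFinset v, (etaStarOf lam u v + etaOf lam j u v)) +
    ∏ u ∈ G.neighborFinset v, etaStarOf lam u v

/-- Denominator of the SP 3-COL summary formula for `ζ^i_v`. -/
noncomputable def spDenSum (G : SimpleGraph Δ) [DecidableRel G.Adj]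
    (lam : Δ → Δ → Tok3 → ℝ) (v : Δ) : ℝ :=
  (∑ j : Fin 3, ∏ u ∈ G.neighborFinset v, (1 - etaOf lam j u v)) -
    (∑ j : Fin 3,
      ∏ u ∈ G.neighborFinset v, (etaStarOf lam u v + etaOf lam j u v)) +
    ∏ u ∈ G.neighborFinset v, etaStarOf lam u v

/-- The normalizing sum written out over the seven tokens. -/
lemma tokSum_eq (m : Tok3 → ℝ) :
    tokSum m = m (sTok 0) + m (sTok 1) + m (sTok 2) + m (pTok 0 1) + m (pTok 0 2) +
      m (pTok 1 2) + m uTok := by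
  have h : (univ : Finset Tok3) =
      {sTok 0, sTok 1, sTok 2, pTok 0 1, pTok 0 2, pTok 1 2, uTok} := by decide
  unfold tokSum
  rw [h, sum_insert (by decide), sum_insert (by decide), sum_insert (by decide),
    sum_insert (by decide), sum_insert (by decide), sum_insert (by decide), sum_singleton]
  ring

lemma tokSum_nrm (m : Tok3 → ℝ) (h : tokSum m ≠ 0) : tokSum (nrm m) = 1 := by
  unfold nrm
  rw [tokSum, ← Finset.sum_div]
  exact div_self h

/-- A right message `r` computed from a left message `l` is already normalized; its values are
`η^k` on the pair `{i,j}` and `η^*` on `{1,2,3}`. -/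
lemma nrm_rho (l r : Tok3 → ℝ) (hl : tokSum l ≠ 0)
    (hr : ∀ i j k : Fin 3, i ≠ j → i ≠ k → j ≠ k →
      r (pTok i j) = nrm l (sTok k) ∧
      r uTok = nrm l (pTok i j) + nrm l (pTok i k) + nrm l (pTok j k) + nrm l uTok ∧
      r (sTok i) = 0) :
    (∀ i j k : Fin 3, i ≠ j → i ≠ k → j ≠ k → nrm r (pTok i j) = nrm l (sTok k)) ∧
      nrm r uTok = 1 - ∑ j : Fin 3, nrm l (sTok j) := by
  have hl1 := tokSum_nrm l hl
  rw [tokSum_eq] at hl1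
  obtain ⟨h01, hu, h0⟩ := hr 0 1 2 (by decide) (by decide) (by decide)
  obtain ⟨h12, -, h1⟩ := hr 1 2 0 (by decide) (by decide) (by decide)
  obtain ⟨h02, -, -⟩ := hr 0 2 1 (by decide) (by decide) (by decide)
  obtain ⟨-, -, h2⟩ := hr 2 0 1 (by decide) (by decide) (by decide)
  have hs : tokSum r = 1 := by
    rw [tokSum_eq, h0, h1, h2, h01, h02, h12, hu]
    linarith
  have hn : ∀ t, nrm r t = r t := fun t => by simp [nrm, hs]
  refine ⟨fun i j k hij hik hjk => (hn _).trans (hr i j k hij hik hjk).1, ?_⟩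
  rw [hn, hu, Fin.sum_univ_three]
  linarith

/-- The PTP left update over an arbitrary neighbor set `S` of the vertex `v`: the value at `{i}` is
the SP numerator and the normalizing sum is the SP denominator. -/
lemma update_eq (lam ρ : Δ → Δ → Tok3 → ℝ) (v : Δ) (S : Finset Δ) (m : Tok3 → ℝ)
    (hl : ∀ w ∈ S, tokSum (lam w v) ≠ 0)
    (hr : ∀ w ∈ S, ∀ i j k : Fin 3, i ≠ j → i ≠ k → j ≠ k →
      ρ v w (pTok i j) = nrm (lam w v) (sTok k) ∧
      ρ v w uTok =
        nrm (lam w v) (pTok i j) + nrm (lam w v) (pTok i k) +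
          nrm (lam w v) (pTok j k) + nrm (lam w v) uTok ∧
      ρ v w (sTok i) = 0)
    (hm : ∀ i j k : Fin 3, i ≠ j → i ≠ k → j ≠ k →
      m (sTok i) =
        (∏ w ∈ S,
            (nrm (ρ v w) (pTok i j) + nrm (ρ v w) (pTok i k) + nrm (ρ v w) uTok)) -
          (∏ w ∈ S, (nrm (ρ v w) (pTok i j) + nrm (ρ v w) uTok)) -
          (∏ w ∈ S, (nrm (ρ v w) (pTok i k) + nrm (ρ v w) uTok)) +
          ∏ w ∈ S, nrm (ρ v w) uTok ∧
      m (pTok i j) =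
        (∏ w ∈ S, (nrm (ρ v w) (pTok i j) + nrm (ρ v w) uTok)) -
          ∏ w ∈ S, nrm (ρ v w) uTok ∧
      m uTok = ∏ w ∈ S, nrm (ρ v w) uTok) :
    (∀ i : Fin 3, m (sTok i) =
      (∏ w ∈ S, (1 - etaOf lam i w v)) -
        (∑ j ∈ univ.erase i, ∏ w ∈ S, (etaStarOf lam w v + etaOf lam j w v)) +
        ∏ w ∈ S, etaStarOf lam w v) ∧
    tokSum m =
      (∑ j : Fin 3, ∏ w ∈ S, (1 - etaOf lam j w v)) -
        (∑ j : Fin 3, ∏ w ∈ S, (etaStarOf lam w v + etaOf lam j w v)) +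
        ∏ w ∈ S, etaStarOf lam w v := by
  have hn := fun w hw => nrm_rho (lam w v) (ρ v w) (hl w hw) (hr w hw)
  have hU : ∏ w ∈ S, nrm (ρ v w) uTok = ∏ w ∈ S, etaStarOf lam w v :=
    prod_congr rfl fun w hw => (hn w hw).2
  have hP : ∀ i j k : Fin 3, i ≠ j → i ≠ k → j ≠ k →
      ∏ w ∈ S, (nrm (ρ v w) (pTok i j) + nrm (ρ v w) uTok) =
        ∏ w ∈ S, (etaStarOf lam w v + etaOf lam k w v) := fun i j k hij hik hjk =>
    prod_congr rfl fun w hw => by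
      rw [(hn w hw).1 i j k hij hik hjk, (hn w hw).2, add_comm, etaStarOf, etaOf]
  have hE : ∀ i j k : Fin 3, i ≠ j → i ≠ k → j ≠ k → (univ : Finset (Fin 3)) = {i, j, k} := by
    decide
  have hT : ∀ i j k : Fin 3, i ≠ j → i ≠ k → j ≠ k →
      ∏ w ∈ S, (nrm (ρ v w) (pTok i j) + nrm (ρ v w) (pTok i k) + nrm (ρ v w) uTok) =
        ∏ w ∈ S, (1 - etaOf lam i w v) := fun i j k hij hik hjk =>
    prod_congr rfl fun w hw => by
      rw [(hn w hw).1 i j k hij hik hjk, (hn w hw).1 i k j hik hij hjk.symm, (hn w hw).2,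
        hE i j k hij hik hjk, sum_insert (by simp [hij, hik]), sum_pair hjk, etaOf]
      ring
  have hS : ∀ i j k : Fin 3, i ≠ j → i ≠ k → j ≠ k → m (sTok i) =
      (∏ w ∈ S, (1 - etaOf lam i w v)) -
        (∑ j ∈ univ.erase i, ∏ w ∈ S, (etaStarOf lam w v + etaOf lam j w v)) +
        ∏ w ∈ S, etaStarOf lam w v := fun i j k hij hik hjk => by
    have he : (univ : Finset (Fin 3)).erase i = {j, k} := by
      rw [hE i j k hij hik hjk, erase_insert (by simp [hij, hik])]
    rw [(hm i j k hij hik hjk).1, hT i j k hij hik hjk, hP i j k hij hik hjk,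
      hP i k j hik hij hjk.symm, hU, he, sum_pair hjk]
    ring
  have hS' : ∀ i : Fin 3, m (sTok i) =
      (∏ w ∈ S, (1 - etaOf lam i w v)) -
        (∑ j ∈ univ.erase i, ∏ w ∈ S, (etaStarOf lam w v + etaOf lam j w v)) +
        ∏ w ∈ S, etaStarOf lam w v := fun i =>
    hS i (i + 1) (i + 2) (by revert i; decide) (by revert i; decide) (by revert i; decide)
  refine ⟨hS', ?_⟩
  have hpair : ∀ i j k : Fin 3, i ≠ j → i ≠ k → j ≠ k → m (pTok i j) =
      (∏ w ∈ S, (etaStarOf lam w v + etaOf lam k w v)) - ∏ w ∈ S, etaStarOf lam w v :=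
    fun i j k hij hik hjk => by
      rw [(hm i j k hij hik hjk).2.1, hP i j k hij hik hjk, hU]
  have hu : m uTok = ∏ w ∈ S, etaStarOf lam w v := by
    rw [(hm 0 1 2 (by decide) (by decide) (by decide)).2.2, hU]
  have he : ∀ i : Fin 3, ∀ f : Fin 3 → ℝ, ∑ j ∈ univ.erase i, f j = ∑ j, f j - f i :=
    fun i f => sum_erase_eq_sub (mem_univ i)
  rw [tokSum_eq, hS', hS', hS', hpair 0 1 2 (by decide) (by decide) (by decide),
    hpair 0 2 1 (by decide) (by decide) (by decide),
    hpair 1 2 0 (by decide) (by decide) (by decide), hu, he, he, he]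
  simp only [Fin.sum_univ_three]
  ring

/-- Consider the 3-COL CSP of a graph `G`.  Starting from
nonnegative left messages `lam` with nonzero normalizing sums, compute the right
messages `ρ` by the 3-COL PTP right update from `lam^norm`, then the next left
messages `lam'` and the summaries `μ` by the 3-COL PTP left/summary updates from
`ρ^norm` (all with nonzero normalizing sums).  Setting `η^i_{u→v} := lam^norm_{u→{u,v}}({i})`,
`η^* := 1 − Σ_j η^j`, and likewise `η'` from `lam'`, the messages `(η', η'^*)` are
obtained from `(η, η^*)` by the SP 3-COL update, the SP denominator being the
normalizing sum `Σ_T lam'(T)` (hence nonzero); moreover `μ^norm_v({i}) = ζ^i_v` and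
`1 − Σ_j μ^norm_v({j}) = ζ^*_v` with `ζ` computed from `(η, η^*)` by the SP 3-COL
summary formulas. -/
theorem stmt10 (G : SimpleGraph Δ) [DecidableRel G.Adj]
    (hdeg : ∀ v : Δ, 2 ≤ (G.neighborFinset v).card)
    (lam : Δ → Δ → Tok3 → ℝ)
    (hlam_nonneg : ∀ u v : Δ, G.Adj u v → ∀ t : Tok3, 0 ≤ lam u v t)
    (hlam_sum : ∀ u v : Δ, G.Adj u v → tokSum (lam u v) ≠ 0)
    (ρ : Δ → Δ → Tok3 → ℝ)
    (hρ : ∀ v u : Δ, G.Adj v u → ∀ i j k : Fin 3, i ≠ j → i ≠ k → j ≠ k →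
      ρ v u (pTok i j) = nrm (lam u v) (sTok k) ∧
      ρ v u uTok =
        nrm (lam u v) (pTok i j) + nrm (lam u v) (pTok i k) +
          nrm (lam u v) (pTok j k) + nrm (lam u v) uTok ∧
      ρ v u (sTok i) = 0)
    (hρ_sum : ∀ v u : Δ, G.Adj v u → tokSum (ρ v u) ≠ 0)
    (lam' : Δ → Δ → Tok3 → ℝ)
    (hlam' : ∀ v u : Δ, G.Adj v u → ∀ i j k : Fin 3, i ≠ j → i ≠ k → j ≠ k →
      lam' v u (sTok i) =
        (∏ w ∈ (G.neighborFinset v).erase u,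
            (nrm (ρ v w) (pTok i j) + nrm (ρ v w) (pTok i k) + nrm (ρ v w) uTok)) -
          (∏ w ∈ (G.neighborFinset v).erase u,
            (nrm (ρ v w) (pTok i j) + nrm (ρ v w) uTok)) -
          (∏ w ∈ (G.neighborFinset v).erase u,
            (nrm (ρ v w) (pTok i k) + nrm (ρ v w) uTok)) +
          ∏ w ∈ (G.neighborFinset v).erase u, nrm (ρ v w) uTok ∧
      lam' v u (pTok i j) =
        (∏ w ∈ (G.neighborFinset v).erase u,
            (nrm (ρ v w) (pTok i j) + nrm (ρ v w) uTok)) -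
          ∏ w ∈ (G.neighborFinset v).erase u, nrm (ρ v w) uTok ∧
      lam' v u uTok = ∏ w ∈ (G.neighborFinset v).erase u, nrm (ρ v w) uTok)
    (hlam'_sum : ∀ u v : Δ, G.Adj u v → tokSum (lam' u v) ≠ 0)
    (μ : Δ → Tok3 → ℝ)
    (hμ : ∀ v : Δ, ∀ i j k : Fin 3, i ≠ j → i ≠ k → j ≠ k →
      μ v (sTok i) =
        (∏ w ∈ G.neighborFinset v,
            (nrm (ρ v w) (pTok i j) + nrm (ρ v w) (pTok i k) + nrm (ρ v w) uTok)) -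
          (∏ w ∈ G.neighborFinset v, (nrm (ρ v w) (pTok i j) + nrm (ρ v w) uTok)) -
          (∏ w ∈ G.neighborFinset v, (nrm (ρ v w) (pTok i k) + nrm (ρ v w) uTok)) +
          ∏ w ∈ G.neighborFinset v, nrm (ρ v w) uTok ∧
      μ v (pTok i j) =
        (∏ w ∈ G.neighborFinset v, (nrm (ρ v w) (pTok i j) + nrm (ρ v w) uTok)) -
          ∏ w ∈ G.neighborFinset v, nrm (ρ v w) uTok ∧
      μ v uTok = ∏ w ∈ G.neighborFinset v, nrm (ρ v w) uTok)
    (hμ_sum : ∀ v : Δ, tokSum (μ v) ≠ 0) :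
    (∀ u v : Δ, G.Adj u v →
      (∀ i : Fin 3, nrm (lam' u v) (sTok i) = spNum G lam i u v / spDen G lam u v) ∧
      spDen G lam u v = tokSum (lam' u v) ∧ spDen G lam u v ≠ 0 ∧
      1 - (∑ j : Fin 3, nrm (lam' u v) (sTok j)) =
        1 - ∑ j : Fin 3, spNum G lam j u v / spDen G lam u v) ∧
    ∀ v : Δ,
      (∀ i : Fin 3, nrm (μ v) (sTok i) = spNumSum G lam i v / spDenSum G lam v) ∧
      1 - (∑ j : Fin 3, nrm (μ v) (sTok j)) =
        1 - ∑ j : Fin 3, spNumSum G lam j v / spDenSum G lam v := by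
  have hN : ∀ v w, w ∈ G.neighborFinset v → G.Adj v w := fun v w hw => by simpa using hw
  constructor
  · intro u v huv
    obtain ⟨h1, h2⟩ := update_eq lam ρ u ((G.neighborFinset u).erase v) (lam' u v)
      (fun w hw => hlam_sum w u (hN u w (mem_of_mem_erase hw)).symm)
      (fun w hw => hρ u w (hN u w (mem_of_mem_erase hw))) (hlam' u v huv)
    have hd : spDen G lam u v = tokSum (lam' u v) := h2.symm
    have hs : ∀ i : Fin 3,
        nrm (lam' u v) (sTok i) = spNum G lam i u v / spDen G lam u v := fun i => by
      rw [hd, nrm, h1 i, spNum]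
    exact ⟨hs, hd, hd ▸ hlam'_sum u v huv, by simp only [hs]⟩
  · intro v
    obtain ⟨h1, h2⟩ := update_eq lam ρ v (G.neighborFinset v) (μ v)
      (fun w hw => hlam_sum w v (hN v w hw).symm) (fun w hw => hρ v w (hN v w hw)) (hμ v)
    have hs : ∀ i : Fin 3,
        nrm (μ v) (sTok i) = spNumSum G lam i v / spDenSum G lam v := fun i => by
      rw [nrm, h1 i, h2, spNumSum, spDenSum]
    exact ⟨hs, by simp only [hs]⟩
end

section
/- Consider the 3-COL CSP of a graph G = (Δ, Ξ) in which every vertex has at least two neighbors, with BP messages as in the 3-COL BP update. Suppose the messages at some iteration l are nonnegative, satisfy the state-decoupling condition, and satisfy ρ^(l)_{c→v}({1,2,3},{1,2,3}) > 0 for every pair (v-c); and suppose that the messages at iteration l+1, obtained by one BP update (all λ^(l+1) computed from the ρ^(l), then all ρ^(l+1) computed from the λ^(l+1)), also satisfy the state-decoupling condition. Then for every pair (v-c) and all distinct colors i, j: ρ^(l)_{c→v}({i},{i,j}) = 0 and ρ^(l)_{c→v}({i,j},{i,j}) = 0; that is, every right message at iteration l whose right state differs from {1,2,3} vanishes. 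-/
/-!
Fix a pair `(v-c)` with `c = {v,u}`, and put `P_{ij} = λ_{v→c}({i,j},{i,j})` and
`Q = λ_{v→c}({1,2,3},{1,2,3})`.  State decoupling at iteration `l` gives
`λ_{v→c}({i,j},{1,2,3}) = P_{ij} - Q`, and state decoupling at iteration `l+1` says that every
`P_{jk}`, being `ρ^{(l+1)}({i},{1,2,3})`, equals
`(P_{12} - Q) + (P_{13} - Q) + (P_{23} - Q) + Q`.  So the three `P`'s are equal to some `P` with
`P = 3P - 2Q`, that is `P = Q`.  Written out, `∏_b (a_b + U_b) = ∏_b U_b` with `a_b ≥ 0` and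
`U_b > 0`, which forces every `a_b = ρ_{b→v}({i,j},{i,j})` to vanish
(`eq_zero_of_prod_add_eq_prod`).  As every vertex has degree at least two, each edge at `v` occurs
as such a `b` for some other edge `c` at `v`.
-/

open Finset

theorem eq_zero_of_prod_add_eq_prod {ι : Type*} (s : Finset ι) (a U : ι → ℝ)
    (ha : ∀ w ∈ s, 0 ≤ a w) (hU : ∀ w ∈ s, 0 < U w)
    (h : ∏ w ∈ s, (a w + U w) = ∏ w ∈ s, U w) : ∀ w ∈ s, a w = 0 := by
  intro w hw
  by_contra hne
  have hlt : 0 < a w := lt_of_le_of_ne (ha w hw) (Ne.symm hne)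
  have := Finset.prod_lt_prod (s := s) (f := U) (g := fun w => a w + U w) hU
    (fun x hx => by linarith [ha x hx]) ⟨w, hw, by linarith⟩
  exact absurd h this.ne'

theorem exists_third_color (i j : Fin 3) (h : i ≠ j) : ∃ k, i ≠ k ∧ j ≠ k := by
  revert i j
  decide

/-- Consider the 3-COL CSP of a graph in which every vertex has at
least two neighbors, with BP messages on the normally realized MRF (`ω_v(a|b) = [a=b]`).
Here `ρl v u` denotes the right message `ρ^{(l)}_{c→v}` along the edge `c = {v,u}`
(a function of the state configuration `(s^L, s^R)`), `lam1 v u` denotes the left message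
`λ^{(l+1)}_{v→c}`, and `rho1 v u` denotes `ρ^{(l+1)}_{c→v}`.  If the messages at
iteration `l` are nonnegative, satisfy the state-decoupling condition, and satisfy
`ρ^{(l)}({1,2,3},{1,2,3}) > 0` for every pair, and the messages at iteration `l+1`
(obtained by one BP update) also satisfy the state-decoupling condition, then every
right message at iteration `l` whose right state differs from `{1,2,3}` vanishes. -/
theorem stmt13 {Δ : Type} [Fintype Δ] [DecidableEq Δ]
    (G : SimpleGraph Δ) [DecidableRel G.Adj]
    (hdeg : ∀ v : Δ, 2 ≤ (G.neighborFinset v).card)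
    (ρl lam1 rho1 : Δ → Δ → Tok3 → Tok3 → ℝ)
    -- nonnegativity of the iteration-`l` right messages
    (hnn : ∀ v u : Δ, G.Adj v u → ∀ i j k : Fin 3, i ≠ j → i ≠ k → j ≠ k →
      0 ≤ ρl v u (sTok i) (pTok i j) ∧ 0 ≤ ρl v u (sTok i) uTok ∧
      0 ≤ ρl v u (pTok i j) (pTok i j) ∧ 0 ≤ ρl v u (pTok i j) uTok ∧
      0 ≤ ρl v u uTok uTok)
    -- the state-decoupling condition at iteration `l`
    (hsd : ∀ v u : Δ, G.Adj v u → ∀ i j k : Fin 3, i ≠ j → i ≠ k → j ≠ k →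
      ρl v u (sTok i) (pTok i j) = ρl v u (pTok i j) (pTok i j) ∧
      ρl v u (sTok i) uTok = ρl v u (pTok i j) uTok ∧
      ρl v u (pTok i j) uTok = ρl v u uTok uTok)
    -- positivity of `ρ^{(l)}({1,2,3},{1,2,3})`
    (hpos : ∀ v u : Δ, G.Adj v u → 0 < ρl v u uTok uTok)
    -- the BP left update computing `λ^{(l+1)}` from `ρ^{(l)}`
    (hlam1 : ∀ v u : Δ, G.Adj v u → ∀ i j k : Fin 3, i ≠ j → i ≠ k → j ≠ k →
      lam1 v u (sTok i) (pTok i j) =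
        (∏ w ∈ (G.neighborFinset v).erase u,
            (ρl v w (sTok i) (pTok i j) + ρl v w (sTok i) (pTok i k) +
              ρl v w (sTok i) uTok)) -
          ∏ w ∈ (G.neighborFinset v).erase u,
            (ρl v w (sTok i) (pTok i j) + ρl v w (sTok i) uTok) ∧
      lam1 v u (sTok i) uTok =
        (∏ w ∈ (G.neighborFinset v).erase u,
            (ρl v w (sTok i) (pTok i j) + ρl v w (sTok i) (pTok i k) +
              ρl v w (sTok i) uTok)) -
          (∏ w ∈ (G.neighborFinset v).erase u,
            (ρl v w (sTok i) (pTok i j) + ρl v w (sTok i) uTok)) -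
          (∏ w ∈ (G.neighborFinset v).erase u,
            (ρl v w (sTok i) (pTok i k) + ρl v w (sTok i) uTok)) +
          ∏ w ∈ (G.neighborFinset v).erase u, ρl v w (sTok i) uTok ∧
      lam1 v u (pTok i j) (pTok i j) =
        ∏ w ∈ (G.neighborFinset v).erase u,
          (ρl v w (pTok i j) (pTok i j) + ρl v w (pTok i j) uTok) ∧
      lam1 v u (pTok i j) uTok =
        (∏ w ∈ (G.neighborFinset v).erase u,
            (ρl v w (pTok i j) (pTok i j) + ρl v w (pTok i j) uTok)) -
          ∏ w ∈ (G.neighborFinset v).erase u, ρl v w (pTok i j) uTok ∧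
      lam1 v u uTok uTok = ∏ w ∈ (G.neighborFinset v).erase u, ρl v w uTok uTok)
    -- the BP right update computing `ρ^{(l+1)}` from `λ^{(l+1)}` (`u` the other
    -- endpoint of the edge)
    (hrho1 : ∀ v u : Δ, G.Adj v u → ∀ i j k : Fin 3, i ≠ j → i ≠ k → j ≠ k →
      rho1 v u (sTok i) (pTok i j) = lam1 u v (sTok k) (pTok j k) ∧
      rho1 v u (sTok i) uTok = lam1 u v (pTok j k) (pTok j k) ∧
      rho1 v u (pTok i j) (pTok i j) = lam1 u v (sTok k) uTok ∧
      rho1 v u (pTok i j) uTok =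
        lam1 u v (pTok 0 1) uTok + lam1 u v (pTok 0 2) uTok +
          lam1 u v (pTok 1 2) uTok + lam1 u v uTok uTok ∧
      rho1 v u uTok uTok =
        lam1 u v (pTok 0 1) uTok + lam1 u v (pTok 0 2) uTok +
          lam1 u v (pTok 1 2) uTok + lam1 u v uTok uTok)
    -- the state-decoupling condition at iteration `l+1`
    (hsd1 : ∀ v u : Δ, G.Adj v u → ∀ i j k : Fin 3, i ≠ j → i ≠ k → j ≠ k →
      rho1 v u (sTok i) (pTok i j) = rho1 v u (pTok i j) (pTok i j) ∧
      rho1 v u (sTok i) uTok = rho1 v u (pTok i j) uTok ∧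
      rho1 v u (pTok i j) uTok = rho1 v u uTok uTok) :
    ∀ v u : Δ, G.Adj v u → ∀ i j : Fin 3, i ≠ j →
      ρl v u (sTok i) (pTok i j) = 0 ∧ ρl v u (pTok i j) (pTok i j) = 0 := by
  intro v w hvw i j hij
  obtain ⟨k, hik, hjk⟩ := exists_third_color i j hij
  obtain ⟨u, hu, huw⟩ :=
    Finset.exists_mem_ne (lt_of_lt_of_le one_lt_two (hdeg v)) w
  have hvu : G.Adj v u := by simpa using hu
  have hadj : ∀ x ∈ (G.neighborFinset v).erase u, G.Adj v x := by
    intro x hx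
    simpa using Finset.mem_of_mem_erase hx
  have hpair : ∀ i j k : Fin 3, i ≠ j → i ≠ k → j ≠ k →
      lam1 v u (pTok i j) uTok = lam1 v u (pTok i j) (pTok i j) - lam1 v u uTok uTok := by
    intro i j k hij hik hjk
    obtain ⟨-, -, h3, h4, h5⟩ := hlam1 v u hvu i j k hij hik hjk
    rw [h3, h4, h5]
    congr 1
    exact Finset.prod_congr rfl fun x hx => (hsd v x (hadj x hx) i j k hij hik hjk).2.2
  have hsum : ∀ i j k : Fin 3, i ≠ j → i ≠ k → j ≠ k →
      lam1 v u (pTok j k) (pTok j k) =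
        lam1 v u (pTok 0 1) uTok + lam1 v u (pTok 0 2) uTok +
          lam1 v u (pTok 1 2) uTok + lam1 v u uTok uTok := by
    intro i j k hij hik hjk
    obtain ⟨-, h2, -, h4, -⟩ := hrho1 u v hvu.symm i j k hij hik hjk
    rw [← h2, ← h4]
    exact (hsd1 u v hvu.symm i j k hij hik hjk).2.1
  -- `P = 3P - 2Q`, hence `P = Q`
  have hPQ : lam1 v u (pTok i j) (pTok i j) = lam1 v u uTok uTok := by
    have a := hpair 0 1 2 (by decide) (by decide) (by decide)
    have b := hpair 0 2 1 (by decide) (by decide) (by decide)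
    have c := hpair 1 2 0 (by decide) (by decide) (by decide)
    have a' := hsum 2 0 1 (by decide) (by decide) (by decide)
    have b' := hsum 1 0 2 (by decide) (by decide) (by decide)
    have c' := hsum 0 1 2 (by decide) (by decide) (by decide)
    have d := hsum k i j hik.symm hjk.symm hij
    linarith
  obtain ⟨-, -, h3, -, h5⟩ := hlam1 v u hvu i j k hij hik hjk
  have hprod : ∏ x ∈ (G.neighborFinset v).erase u,
      (ρl v x (pTok i j) (pTok i j) + ρl v x uTok uTok) =
        ∏ x ∈ (G.neighborFinset v).erase u, ρl v x uTok uTok := by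
    rw [← h5, ← hPQ, h3]
    exact Finset.prod_congr rfl fun x hx => by
      rw [(hsd v x (hadj x hx) i j k hij hik hjk).2.2]
  have hzero : ρl v w (pTok i j) (pTok i j) = 0 :=
    eq_zero_of_prod_add_eq_prod _ _ _
      (fun x hx => (hnn v x (hadj x hx) i j k hij hik hjk).2.2.1)
      (fun x hx => hpos v x (hadj x hx)) hprod w
      (Finset.mem_erase.2 ⟨huw.symm, by simpa using hvw⟩)
  exact ⟨(hsd v w hvw i j k hij hik hjk).1.trans hzero, hzero⟩
end
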